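/- arXiv:math/0504455 — 2 statements merged into one kernel-verified Lean document; each statement's English description precedes it below -/
import Mathlib

section
/- Let n ≥ 1 and T, M > 0. Let A : ℝⁿ × [0,T] → ℝ^{n×n} be smooth with each A(p,t) symmetric and positive semidefinite, let b : ℝⁿ × [0,T] → ℝ be continuous, and define α(p,t) = |p|² · inf{ (vᵀA(p,t)v)/(v·p)² : v ∈ ℝⁿ, v·p ≠ 0 }. Suppose there is α̃ : (0,∞) → (0,∞) with α(p,t) = α̃(|p|) for all p ≠ 0 and all t ∈ [0,T]. Let u : ℝⁿ × [0,T] → ℝ be smooth, satisfy u_t = Σ_{i,j} A(Du,t)_{ij}·D_{ij}u + b(Du,t), be periodic with respect to some basis γ₁,…,γₙ of ℝⁿ (u(x+γₖ,t) = u(x,t) for every k), and satisfy osc_{x ∈ ℝⁿ} u(x,t) ≤ M for every t ∈ [0,T]. Let φ : [0,∞) × (0,∞) → ℝ be continuous, with continuous partial derivatives φ_t, φ_z, φ_{zz} and with φ_z > 0 on (0,∞) × (0,∞), satisfying φ_t = 4·α̃(|φ_z|)·φ_{zz} there and the barrier boundary conditions. Then for all x, y ∈ ℝⁿ and all t ∈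 (0,T]: |u(y,t) − u(x,t)| ≤ M · φ(|y−x|/M, t/M²). -/
/-!
The proof is the maximum principle in doubled variables, applied to
`u(y,t) - u(x,t) - Φ(|y - x|,t)` with the rescaled barrier `Φ(z,t) = M φ(z/M, t/M²)`. Periodicity
confines the maximum over pairs to a compact set, and the initial condition on `φ` together with the
oscillation bound makes the function at most `ε` for small times. At a positive maximum the points
are distinct, both gradients equal `p = Φ_z (y - x)/|y - x|`, so the terms `b(Du,t)` cancel, and the
difference `H` of the Hessians is nonpositive. Moving the two points apart along `p` gives
`pᵀHp ≤ 4|p|²Φ_zz`. Since `A - |p|⁻²α ppᵀ` is still positive semidefinite, its trace pairing with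
`H` is nonpositive, whence `tr(AH) ≤ 4αΦ_zz = Φ_t`.
-/

open Filter Function Matrix Module Set Topology
open scoped RealInnerProductSpace

section MaximumPrinciple

theorem deriv_deriv_nonpos_of_isLocalMax {g : ℝ → ℝ} {a : ℝ} (hmax : IsLocalMax g a)
    (hg : ContinuousAt g a) : deriv (deriv g) a ≤ 0 := by
  by_contra! hpos
  have hmin : IsLocalMin g a := isLocalMin_of_deriv_deriv_pos hpos hmax.deriv_eq_zero hg
  have hconst : g =ᶠ[𝓝 a] fun _ => g a := by
    filter_upwards [hmax, hmin] with s hle hge using le_antisymm hle hge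
  rw [hconst.deriv.deriv_eq] at hpos
  simp at hpos

theorem second_deriv_nonpos_of_isLocalMax {g g' : ℝ → ℝ} {a c : ℝ} (hmax : IsLocalMax g a)
    (hg : ∀ᶠ s in 𝓝 a, HasDerivAt g (g' s) s) (hg' : HasDerivAt g' c a) : c ≤ 0 := by
  have hderiv : deriv g =ᶠ[𝓝 a] g' := hg.mono fun _ hs => hs.deriv
  rw [← hg'.deriv, ← hderiv.deriv_eq]
  exact deriv_deriv_nonpos_of_isLocalMax hmax hg.self_of_nhds.continuousAt

theorem deriv_nonneg_of_isMaxOn_Icc {g : ℝ → ℝ} {g' a b : ℝ} (hab : a < b)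
    (hg : HasDerivWithinAt g g' (Icc a b) b) (hmax : IsMaxOn g (Icc a b) b) : 0 ≤ g' := by
  have hcone : a - b ∈ posTangentConeAt (Icc a b) b :=
    sub_mem_posTangentConeAt_of_segment_subset
      ((convex_Icc a b).segment_subset (right_mem_Icc.2 hab.le) (left_mem_Icc.2 hab.le))
  have hle : (a - b) * g' ≤ 0 := by
    simpa using hmax.localize.hasFDerivWithinAt_nonpos hg.hasFDerivWithinAt hcone
  exact nonneg_of_mul_nonpos_right hle (sub_neg.2 hab)

theorem nonpos_of_deriv_nonpos_at_positive_max {X : Type*} [TopologicalSpace X] {K : Set X}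
    (hK : IsCompact K) {T : ℝ} {w : X → ℝ → ℝ}
    (hcont : ContinuousOn (fun q : X × ℝ => w q.1 q.2) (K ×ˢ Ioc 0 T))
    (hinit : ∀ ε > 0, ∀ᶠ t in 𝓝[>] 0, ∀ x ∈ K, w x t ≤ ε)
    (hderiv : ∀ x ∈ K, ∀ t ∈ Ioc 0 T, 0 < w x t → IsMaxOn (fun x => w x t) K x →
      ∃ w' ≤ 0, HasDerivWithinAt (w x) w' (Icc 0 T) t) :
    ∀ x ∈ K, ∀ t ∈ Ioc 0 T, w x t ≤ 0 := by
  intro x₁ hx₁ t₁ ht₁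
  by_contra! hpos
  have ht₁' : 0 < 1 + t₁ := by linarith [ht₁.1]
  obtain ⟨ε, hε, hεlt⟩ : ∃ ε > 0, ε * (1 + t₁) < w x₁ t₁ :=
    ⟨w x₁ t₁ / (1 + t₁) / 2, by positivity, by
      rw [div_right_comm, div_mul_cancel₀ _ ht₁'.ne']; linarith⟩
  obtain ⟨τ, hτ : 0 < τ, hτw⟩ := mem_nhdsGT_iff_exists_Ioc_subset.1 (hinit ε hε)
  have hτlt : ∀ x ∈ K, ∀ t, 0 < t → ε * (1 + t) < w x t → τ < t := fun x hx t ht hlt => by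
    by_contra! htτ
    have hle : w x t ≤ ε := hτw ⟨ht, htτ⟩ x hx
    nlinarith
  have hsub : Icc τ T ⊆ Ioc 0 T := fun s hs => ⟨hτ.trans_le hs.1, hs.2⟩
  have ht₁τ : t₁ ∈ Icc τ T := ⟨(hτlt x₁ hx₁ t₁ ht₁.1 hεlt).le, ht₁.2⟩
  have hvcont : ContinuousOn (fun q : X × ℝ => w q.1 q.2 - ε * (1 + q.2)) (K ×ˢ Icc τ T) :=
    (hcont.mono (prod_mono_right hsub)).sub (by fun_prop)
  obtain ⟨⟨x₀, t₀⟩, ⟨hx₀, ht₀⟩, hmax⟩ :=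
    (hK.prod isCompact_Icc).exists_isMaxOn ⟨(x₁, t₁), hx₁, ht₁τ⟩ hvcont
  have hle : ∀ x ∈ K, ∀ t ∈ Icc τ T, w x t - ε * (1 + t) ≤ w x₀ t₀ - ε * (1 + t₀) :=
    fun x hx t ht => hmax (mk_mem_prod hx ht)
  have ht₀pos : 0 < t₀ := (hsub ht₀).1
  have hw₀ : ε * (1 + t₀) < w x₀ t₀ := by linarith [hle x₁ hx₁ t₁ ht₁τ]
  obtain ⟨w', hw', hwd⟩ := hderiv x₀ hx₀ t₀ (hsub ht₀)
    ((by positivity : 0 < ε * (1 + t₀)).trans hw₀) fun x hx => by simpa using hle x hx t₀ ht₀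
  have hvd : HasDerivWithinAt (fun t => w x₀ t - ε * (1 + t)) (w' - ε) (Icc τ t₀) t₀ := by
    simpa using (hwd.mono (Icc_subset_Icc hτ.le ht₀.2)).fun_sub
      (((hasDerivWithinAt_id t₀ _).const_add 1).const_mul ε)
  have hnonneg := deriv_nonneg_of_isMaxOn_Icc (hτlt x₀ hx₀ t₀ ht₀pos hw₀) hvd
    fun t ht => hle x₀ hx₀ t ⟨ht.1, ht.2.trans ht₀.2⟩
  linarith

end MaximumPrinciple

section TwoPointMaximum

/-- The two-point function `(x, y) ↦ f y - f x - ψ (|y - x|)` of the method of doubling variables: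
it is nonpositive exactly when `ψ` is a modulus of continuity of `f`. -/
def twoPointFun {X : Type*} [Dist X] (f : X → ℝ) (ψ : ℝ → ℝ) (q : X × X) : ℝ :=
  f q.2 - f q.1 - ψ (dist q.1 q.2)

theorem hasDerivAt_add_smul {V : Type*} [NormedAddCommGroup V] [NormedSpace ℝ V] (x v : V) (s : ℝ) :
    HasDerivAt (fun s : ℝ => x + s • v) v s := by
  simpa using ((hasDerivAt_id s).smul_const v).const_add x

theorem hasDerivAt_comp_add_smul {V : Type*} [NormedAddCommGroup V] [NormedSpace ℝ V] {f : V → ℝ}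
    {x v : V} {s : ℝ} (hf : DifferentiableAt ℝ f (x + s • v)) :
    HasDerivAt (fun s : ℝ => f (x + s • v)) (fderiv ℝ f (x + s • v) v) s :=
  hf.hasFDerivAt.comp_hasDerivAt s (hasDerivAt_add_smul x v s)

theorem hasDerivAt_fderiv_comp_add_smul {V : Type*} [NormedAddCommGroup V] [NormedSpace ℝ V]
    {f : V → ℝ} {x : V} (hf : DifferentiableAt ℝ (fderiv ℝ f) x) (v : V) :
    HasDerivAt (fun s : ℝ => fderiv ℝ f (x + s • v) v) (fderiv ℝ (fderiv ℝ f) x v v) 0 := by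
  have hcomp : HasDerivAt (fun s : ℝ => fderiv ℝ f (x + s • v)) (fderiv ℝ (fderiv ℝ f) x v) 0 :=
    HasFDerivAt.comp_hasDerivAt (l := fderiv ℝ f) 0 (by simpa using hf.hasFDerivAt)
      (hasDerivAt_add_smul x v 0)
  exact (ContinuousLinearMap.apply ℝ ℝ v).hasFDerivAt.comp_hasDerivAt 0 hcomp

variable {E : Type*} [NormedAddCommGroup E] [InnerProductSpace ℝ E]
  {f : E → ℝ} {ψ : ℝ → ℝ} {x y : E}

theorem hasDerivAt_dist_add_smul (hxy : x ≠ y) (v w : E) :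
    HasDerivAt (fun s : ℝ => dist (x + s • v) (y + s • w)) (⟪y - x, w - v⟫ / dist x y) 0 := by
  have hdiff : HasDerivAt (fun s : ℝ => y + s • w - (x + s • v)) (w - v) 0 :=
    (hasDerivAt_add_smul y w 0).fun_sub (hasDerivAt_add_smul x v 0)
  have hne : ‖y + (0 : ℝ) • w - (x + (0 : ℝ) • v)‖ ^ 2 ≠ 0 := by
    simpa [sub_eq_zero] using hxy.symm
  have hsqrt := hdiff.norm_sq.sqrt hne
  simp only [Real.sqrt_sq (norm_nonneg _), zero_smul, add_zero] at hsqrt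
  simp only [dist_eq_norm']
  exact hsqrt.congr_deriv (mul_div_mul_left _ _ two_ne_zero)

theorem isLocalMax_twoPointFun_comp (hmax : IsLocalMax (twoPointFun f ψ) (x, y)) (v w : E) :
    IsLocalMax (fun s : ℝ => f (y + s • w) - f (x + s • v) - ψ (dist (x + s • v) (y + s • w)))
      0 := by
  have hcurve : ContinuousAt (fun s : ℝ => (x + s • v, y + s • w)) 0 := by fun_prop
  exact IsLocalMax.comp_continuous (f := twoPointFun f ψ) (by simpa using hmax) hcurve

theorem fderiv_sub_fderiv_of_isLocalMax_twoPointFun {ψ' : ℝ}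
    (hmax : IsLocalMax (twoPointFun f ψ) (x, y)) (hxy : x ≠ y) (hfx : DifferentiableAt ℝ f x)
    (hfy : DifferentiableAt ℝ f y) (hψ : HasDerivAt ψ ψ' (dist x y)) (v w : E) :
    fderiv ℝ f y w - fderiv ℝ f x v = ψ' * (⟪y - x, w - v⟫ / dist x y) := by
  have hy := hasDerivAt_comp_add_smul (x := y) (v := w) (s := 0) (by simpa using hfy)
  have hx := hasDerivAt_comp_add_smul (x := x) (v := v) (s := 0) (by simpa using hfx)
  have hdist := HasDerivAt.comp (h₂ := ψ) 0 (by simpa using hψ) (hasDerivAt_dist_add_smul hxy v w)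
  have hzero := (isLocalMax_twoPointFun_comp hmax v w).hasDerivAt_eq_zero
    ((hy.fun_sub hx).fun_sub hdist)
  simp only [zero_smul, add_zero] at hzero
  linarith

theorem dist_add_smul_of_sub_eq_smul {v w : E} {k : ℝ} (hvw : w - v = k • (y - x)) {s : ℝ}
    (hs : 0 ≤ 1 + s * k) : dist (x + s • v) (y + s • w) = (1 + s * k) * dist x y := by
  have hsub : y + s • w - (x + s • v) = (1 + s * k) • (y - x) := by
    rw [add_sub_add_comm, ← smul_sub, hvw, smul_smul, add_smul, one_smul]
  rw [dist_eq_norm', hsub, norm_smul, Real.norm_of_nonneg hs, dist_eq_norm']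

theorem fderiv_fderiv_sub_le_of_isLocalMax_twoPointFun {ψ' : ℝ → ℝ} {c : ℝ}
    (hmax : IsLocalMax (twoPointFun f ψ) (x, y)) (hf : ContDiff ℝ 2 f)
    (hψ : ∀ᶠ z in 𝓝 (dist x y), HasDerivAt ψ (ψ' z) z) (hψ' : HasDerivAt ψ' c (dist x y))
    {v w : E} {k : ℝ} (hvw : w - v = k • (y - x)) :
    fderiv ℝ (fderiv ℝ f) y w w - fderiv ℝ (fderiv ℝ f) x v v ≤ (k * dist x y) ^ 2 * c := by
  have hf1 : Differentiable ℝ f := hf.differentiable two_ne_zero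
  have hf2 : Differentiable ℝ (fderiv ℝ f) :=
    (hf.fderiv_right (m := 1) one_add_one_eq_two.le).differentiable one_ne_zero
  set ℓ : ℝ → ℝ := fun s => (1 + s * k) * dist x y
  have hℓ : ∀ s, HasDerivAt ℓ (k * dist x y) s := fun s => by
    simpa using (((hasDerivAt_id s).mul_const k).const_add 1).mul_const (dist x y)
  have hℓ0 : ℓ 0 = dist x y := by simp [ℓ]
  have hpos : ∀ᶠ s : ℝ in 𝓝 0, 0 < 1 + s * k :=
    (by fun_prop : ContinuousAt (fun s : ℝ => 1 + s * k) 0).eventually (lt_mem_nhds (by simp))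
  have hlocal : IsLocalMax (fun s : ℝ => f (y + s • w) - f (x + s • v) - ψ (ℓ s)) 0 := by
    refine (isLocalMax_twoPointFun_comp hmax v w).congr (hpos.mono fun s hs => ?_)
    simp only [ℓ, dist_add_smul_of_sub_eq_smul hvw hs.le]
  have hψℓ : ∀ᶠ s in 𝓝 0, HasDerivAt ψ (ψ' (ℓ s)) (ℓ s) :=
    (hℓ 0).continuousAt.eventually (by rwa [hℓ0])
  have hψ'ℓ : HasDerivAt (fun s => ψ' (ℓ s) * (k * dist x y))
      (c * (k * dist x y) * (k * dist x y)) 0 :=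
    (HasDerivAt.comp (h₂ := ψ') 0 (by rwa [hℓ0]) (hℓ 0)).mul_const _
  have hsecond := second_deriv_nonpos_of_isLocalMax hlocal
    (hψℓ.mono fun s hs => ((hasDerivAt_comp_add_smul (hf1 _)).fun_sub
      (hasDerivAt_comp_add_smul (hf1 _))).fun_sub (hs.comp s (hℓ s)))
    (((hasDerivAt_fderiv_comp_add_smul (hf2 y) w).fun_sub
      (hasDerivAt_fderiv_comp_add_smul (hf2 x) v)).fun_sub hψ'ℓ)
  linarith

end TwoPointMaximum

section Ellipticity

variable {ι : Type*} [Fintype ι] {A H : Matrix ι ι ℝ} {p : ι → ℝ}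

theorem dotProduct_mulVec_eq_sum (A : Matrix ι ι ℝ) (v w : ι → ℝ) :
    v ⬝ᵥ A *ᵥ w = ∑ i, ∑ j, v i * A i j * w j := by
  simp only [dotProduct, mulVec, Finset.mul_sum, mul_assoc]

theorem posSemidef_of_sum_nonneg (hsymm : ∀ i j, A i j = A j i)
    (hnonneg : ∀ v : ι → ℝ, 0 ≤ ∑ i, ∑ j, v i * A i j * v j) : A.PosSemidef :=
  .of_dotProduct_mulVec_nonneg (.ext fun i j => hsymm j i) fun v =>
    (hnonneg v).trans_eq (dotProduct_mulVec_eq_sum A v v).symm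

theorem sum_mul_nonpos_of_posSemidef (hA : A.PosSemidef) (hH : ∀ v, v ⬝ᵥ H *ᵥ v ≤ 0) :
    ∑ i, ∑ j, A i j * H i j ≤ 0 := by
  classical
  obtain ⟨B, rfl⟩ : ∃ B : Matrix ι ι ℝ, A = Bᴴ * B := by
    open scoped MatrixOrder in
    exact CStarAlgebra.nonneg_iff_eq_star_mul_self.1 hA.nonneg
  calc ∑ i, ∑ j, (Bᴴ * B) i j * H i j = ∑ i, ∑ j, ∑ k, B k i * H i j * B k j := by
        simp only [mul_apply, conjTranspose_apply, star_trivial, Finset.sum_mul, mul_right_comm]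
    _ = ∑ k, B k ⬝ᵥ H *ᵥ B k := by
        simp only [dotProduct_mulVec_eq_sum]
        rw [Finset.sum_comm (s := (Finset.univ : Finset ι)) (t := Finset.univ)
          (f := fun k i => ∑ j, B k i * H i j * B k j)]
        exact Finset.sum_congr rfl fun i _ => Finset.sum_comm
    _ ≤ 0 := Finset.sum_nonpos fun k _ => hH (B k)

/-- The `α(p,t)` of the theorem for the single matrix `A = A(p,t)`: the infimum of `wᵀAw` over
vectors `w` whose component along `p` has length one (junk value `0` at `p = 0`). -/
noncomputable def minEllipticity (A : Matrix ι ι ℝ) (p : ι → ℝ) : ℝ :=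
  (∑ i, p i ^ 2) * sInf {r : ℝ | ∃ v : ι → ℝ, (∑ i, v i * p i) ≠ 0 ∧
    r = (∑ i, ∑ j, v i * A i j * v j) / (∑ i, v i * p i) ^ 2}

theorem minEllipticity_mul_sq_le (hA : A.PosSemidef) (p v : ι → ℝ) :
    minEllipticity A p * (v ⬝ᵥ p) ^ 2 ≤ (p ⬝ᵥ p) * (v ⬝ᵥ A *ᵥ v) := by
  have hquad : ∀ v : ι → ℝ, 0 ≤ ∑ i, ∑ j, v i * A i j * v j := fun v =>
    (hA.dotProduct_mulVec_nonneg v).trans_eq (dotProduct_mulVec_eq_sum A v v)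
  have hbdd : BddBelow {r : ℝ | ∃ v : ι → ℝ, (∑ i, v i * p i) ≠ 0 ∧
      r = (∑ i, ∑ j, v i * A i j * v j) / (∑ i, v i * p i) ^ 2} :=
    ⟨0, by rintro r ⟨v, -, rfl⟩; exact div_nonneg (hquad v) (sq_nonneg _)⟩
  have hpp : p ⬝ᵥ p = ∑ i, p i ^ 2 := by simp only [dotProduct, sq]
  have hpp_nonneg : 0 ≤ ∑ i, p i ^ 2 := Finset.sum_nonneg fun i _ => sq_nonneg _
  rw [minEllipticity, hpp, mul_assoc, dotProduct_mulVec_eq_sum]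
  refine mul_le_mul_of_nonneg_left ?_ hpp_nonneg
  rcases eq_or_ne (v ⬝ᵥ p) 0 with hv | hv
  · simpa [hv] using hquad v
  · exact (le_div_iff₀ (by positivity)).1 (csInf_le hbdd ⟨v, hv, rfl⟩)

theorem posSemidef_smul_sub_minEllipticity_smul (hA : A.PosSemidef) (p : ι → ℝ) :
    ((p ⬝ᵥ p) • A - minEllipticity A p • vecMulVec p p).PosSemidef := by
  refine .of_dotProduct_mulVec_nonneg ?_ fun v => ?_
  · exact ((hA.isHermitian.smul (.all _)).sub (IsHermitian.smul (by
      ext i j; simp [vecMulVec_apply, mul_comm]) (.all _)))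
  · have hle := minEllipticity_mul_sq_le hA p v
    simp only [star_trivial, sub_mulVec, smul_mulVec, dotProduct_sub, dotProduct_smul, smul_eq_mul,
      vecMulVec_mulVec, op_smul_eq_smul, dotProduct_comm p v]
    linarith

theorem dotProduct_mul_sum_mul_le (hA : A.PosSemidef) (hH : ∀ v, v ⬝ᵥ H *ᵥ v ≤ 0) {α : ℝ}
    (hα : α ≤ minEllipticity A p) :
    (p ⬝ᵥ p) * ∑ i, ∑ j, A i j * H i j ≤ α * (p ⬝ᵥ H *ᵥ p) := by
  have hpair := sum_mul_nonpos_of_posSemidef (posSemidef_smul_sub_minEllipticity_smul hA p) hH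
  have hsplit : ∑ i, ∑ j, ((p ⬝ᵥ p) • A - minEllipticity A p • vecMulVec p p) i j * H i j =
      (p ⬝ᵥ p) * ∑ i, ∑ j, A i j * H i j - minEllipticity A p * (p ⬝ᵥ H *ᵥ p) := by
    simp only [dotProduct_mulVec_eq_sum, Finset.mul_sum, ← Finset.sum_sub_distrib,
      Matrix.sub_apply, Matrix.smul_apply, vecMulVec_apply, smul_eq_mul]
    exact Finset.sum_congr rfl fun i _ => Finset.sum_congr rfl fun j _ => by ring
  have hmono := mul_le_mul_of_nonpos_right hα (hH p)
  linarith

end Ellipticity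

section Coordinates

variable {ι V : Type*} [Fintype ι] [NormedAddCommGroup V] [NormedSpace ℝ V] {f : V → ℝ} {x : V}

theorem fderiv_fderiv_eq_dotProduct_mulVec (b : Basis ι ℝ V) (hf : Differentiable ℝ f)
    (hf' : DifferentiableAt ℝ (fderiv ℝ f) x) {g : V → ι → ℝ} {h : Matrix ι ι ℝ}
    (hg : ∀ z j, HasLineDerivAt ℝ f (g z j) z (b j))
    (hh : ∀ i j, HasLineDerivAt ℝ (fun z => g z j) (h i j) x (b i)) (v w : V) :
    fderiv ℝ (fderiv ℝ f) x v w = b.equivFun v ⬝ᵥ h *ᵥ b.equivFun w := by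
  have hg' : ∀ j, (fun z => g z j) = fun z => fderiv ℝ f z (b j) := fun j =>
    funext fun z => (hg z j).unique ((hf z).hasFDerivAt.hasLineDerivAt (b j))
  have hh' : ∀ i j, fderiv ℝ (fderiv ℝ f) x (b i) (b j) = h i j := fun i j =>
    (hg' j ▸ hh i j : HasLineDerivAt ℝ (fun z => fderiv ℝ f z (b j)) (h i j) x (b i)).unique
      (((ContinuousLinearMap.apply ℝ ℝ (b j)).hasFDerivAt.comp x hf'.hasFDerivAt).hasLineDerivAt
        (b i)) |>.symm
  nth_rw 1 [← b.sum_equivFun v, ← b.sum_equivFun w]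
  simp only [map_sum, map_smul, FunLike.coe_sum, Finset.sum_apply,
    _root_.smul_apply, smul_eq_mul, hh', dotProduct_mulVec_eq_sum, Finset.mul_sum]
  rw [Finset.sum_comm]
  exact Finset.sum_congr rfl fun i _ => Finset.sum_congr rfl fun j _ => by ring

end Coordinates

section CriticalInequality

variable {ι : Type*} [Fintype ι] [DecidableEq ι] {f : EuclideanSpace ℝ ι → ℝ}
  {g : EuclideanSpace ℝ ι → ι → ℝ} {h : EuclideanSpace ℝ ι → Matrix ι ι ℝ}
  {ψ : ℝ → ℝ} {x y : EuclideanSpace ℝ ι}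

theorem partialDeriv_eq_of_isLocalMax_twoPointFun {ψ' : ℝ}
    (hmax : IsLocalMax (twoPointFun f ψ) (x, y)) (hxy : x ≠ y) (hf : Differentiable ℝ f)
    (hg : ∀ z i, HasLineDerivAt ℝ f (g z i) z (EuclideanSpace.single i 1))
    (hψ : HasDerivAt ψ ψ' (dist x y)) :
    g x = (ψ' / dist x y) • WithLp.ofLp (y - x) ∧ g y = (ψ' / dist x y) • WithLp.ofLp (y - x) := by
  have hfd := fderiv_sub_fderiv_of_isLocalMax_twoPointFun hmax hxy (hf x) (hf y) hψ
  have hg' : ∀ z i, g z i = fderiv ℝ f z (EuclideanSpace.single i 1) := fun z i =>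
    (hg z i).unique ((hf z).hasFDerivAt.hasLineDerivAt _)
  refine ⟨funext fun i => ?_, funext fun i => ?_⟩
  · have hfdx := hfd (EuclideanSpace.single i 1) 0
    simp only [map_zero, zero_sub, inner_neg_right, EuclideanSpace.inner_single_right, one_mul,
      conj_trivial, ← hg'] at hfdx
    simp only [Pi.smul_apply, smul_eq_mul]
    linear_combination -hfdx
  · have hfdy := hfd 0 (EuclideanSpace.single i 1)
    simp only [map_zero, sub_zero, EuclideanSpace.inner_single_right, one_mul, conj_trivial,
      ← hg'] at hfdy
    simp only [Pi.smul_apply, smul_eq_mul]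
    linear_combination hfdy

theorem sum_sq_partialDeriv_of_isLocalMax_twoPointFun {ψ' : ℝ}
    (hmax : IsLocalMax (twoPointFun f ψ) (x, y)) (hxy : x ≠ y) (hf : Differentiable ℝ f)
    (hg : ∀ z i, HasLineDerivAt ℝ f (g z i) z (EuclideanSpace.single i 1))
    (hψ : HasDerivAt ψ ψ' (dist x y)) : ∑ i, g y i ^ 2 = ψ' ^ 2 := by
  have hdist : ∑ i, (y - x).ofLp i ^ 2 = dist x y ^ 2 := by
    rw [dist_eq_norm', EuclideanSpace.real_norm_sq_eq]
  simp only [(partialDeriv_eq_of_isLocalMax_twoPointFun hmax hxy hf hg hψ).2, Pi.smul_apply,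
    smul_eq_mul, mul_pow, ← Finset.mul_sum, hdist]
  rw [← mul_pow, div_mul_cancel₀ _ (dist_ne_zero.2 hxy)]

variable {ψ' : ℝ → ℝ} {c : ℝ}

theorem dotProduct_mulVec_sub_le_of_isLocalMax_twoPointFun
    (hmax : IsLocalMax (twoPointFun f ψ) (x, y)) (hf : ContDiff ℝ 2 f)
    (hg : ∀ z i, HasLineDerivAt ℝ f (g z i) z (EuclideanSpace.single i 1))
    (hh : ∀ z i j, HasLineDerivAt ℝ (fun z => g z j) (h z i j) z (EuclideanSpace.single i 1))
    (hψ : ∀ᶠ z in 𝓝 (dist x y), HasDerivAt ψ (ψ' z) z) (hψ' : HasDerivAt ψ' c (dist x y))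
    {v w : EuclideanSpace ℝ ι} {k : ℝ} (hvw : w - v = k • (y - x)) :
    w.ofLp ⬝ᵥ h y *ᵥ w.ofLp - v.ofLp ⬝ᵥ h x *ᵥ v.ofLp ≤ (k * dist x y) ^ 2 * c := by
  have hf1 : Differentiable ℝ f := hf.differentiable two_ne_zero
  have hf2 : Differentiable ℝ (fderiv ℝ f) :=
    (hf.fderiv_right (m := 1) one_add_one_eq_two.le).differentiable one_ne_zero
  have hhess : ∀ z v w, fderiv ℝ (fderiv ℝ f) z v w = v.ofLp ⬝ᵥ h z *ᵥ w.ofLp := fun z =>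
    fderiv_fderiv_eq_dotProduct_mulVec (EuclideanSpace.basisFun ι ℝ).toBasis hf1 (hf2 z)
      (by simpa using hg) (by simpa using hh z)
  simpa only [hhess] using fderiv_fderiv_sub_le_of_isLocalMax_twoPointFun hmax hf hψ hψ' hvw

theorem sum_mul_sub_le_of_isLocalMax_twoPointFun {A : Matrix ι ι ℝ} {α : ℝ} (hA : A.PosSemidef)
    (hα₀ : 0 ≤ α) (hα : α ≤ minEllipticity A (g y)) (hf : ContDiff ℝ 2 f)
    (hg : ∀ z i, HasLineDerivAt ℝ f (g z i) z (EuclideanSpace.single i 1))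
    (hh : ∀ z i j, HasLineDerivAt ℝ (fun z => g z j) (h z i j) z (EuclideanSpace.single i 1))
    (hmax : IsLocalMax (twoPointFun f ψ) (x, y)) (hxy : x ≠ y)
    (hψ : ∀ᶠ z in 𝓝 (dist x y), HasDerivAt ψ (ψ' z) z) (hψ' : HasDerivAt ψ' c (dist x y))
    (hpos : ψ' (dist x y) ≠ 0) :
    ∑ i, ∑ j, A i j * (h y i j - h x i j) ≤ 4 * α * c := by
  have hf1 : Differentiable ℝ f := hf.differentiable two_ne_zero
  set d := dist x y
  set p : EuclideanSpace ℝ ι := (ψ' d / d) • (y - x)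
  have hp : g y = p.ofLp :=
    (partialDeriv_eq_of_isLocalMax_twoPointFun hmax hxy hf1 hg hψ.self_of_nhds).2
  have hpp : p.ofLp ⬝ᵥ p.ofLp = ψ' d ^ 2 := by
    rw [← sum_sq_partialDeriv_of_isLocalMax_twoPointFun hmax hxy hf1 hg hψ.self_of_nhds, hp]
    simp only [dotProduct, sq]
  have hle {v w : EuclideanSpace ℝ ι} {k : ℝ} :=
    dotProduct_mulVec_sub_le_of_isLocalMax_twoPointFun (v := v) (w := w) (k := k) hmax hf hg hh hψ
      hψ'
  have hH : ∀ v, v ⬝ᵥ (h y - h x) *ᵥ v ≤ 0 := fun v => by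
    simpa [sub_mulVec] using hle (v := WithLp.toLp 2 v) (w := WithLp.toLp 2 v) (k := 0) (by simp)
  have hHp : p.ofLp ⬝ᵥ (h y - h x) *ᵥ p.ofLp ≤ 4 * ψ' d ^ 2 * c := by
    have hlep := hle (v := -p) (w := p) (k := 2 * (ψ' d / d)) (by simp only [p]; module)
    rw [mul_assoc, div_mul_cancel₀ _ (dist_ne_zero.2 hxy)] at hlep
    simp only [WithLp.ofLp_neg, mulVec_neg, neg_dotProduct_neg] at hlep
    rw [sub_mulVec, dotProduct_sub]
    linarith
  have hpair : ψ' d ^ 2 * ∑ i, ∑ j, A i j * (h y i j - h x i j) ≤ ψ' d ^ 2 * (4 * α * c) :=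
    calc ψ' d ^ 2 * ∑ i, ∑ j, A i j * (h y - h x) i j
        ≤ α * (p.ofLp ⬝ᵥ (h y - h x) *ᵥ p.ofLp) :=
          hpp ▸ dotProduct_mul_sum_mul_le hA hH (hp ▸ hα)
      _ ≤ α * (4 * ψ' d ^ 2 * c) := mul_le_mul_of_nonneg_left hHp hα₀
      _ = ψ' d ^ 2 * (4 * α * c) := by ring
  exact le_of_mul_le_mul_left hpair (by positivity)

end CriticalInequality

section Periodicity

theorem periodic_of_mem_span_int {ι V β : Type*} [AddCommGroup V] {f : V → β} {γ : ι → V}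
    (hγ : ∀ k, Periodic f (γ k)) {c : V} (hc : c ∈ Submodule.span ℤ (range γ)) :
    Periodic f c := by
  induction hc using Submodule.span_induction with
  | mem _ hmem =>
    obtain ⟨k, rfl⟩ := hmem
    exact hγ k
  | zero => exact fun x => by rw [add_zero]
  | add _ _ _ _ h₁ h₂ => exact h₁.add_period h₂
  | smul n _ _ h => exact h.zsmul n

variable {ι V : Type*} [Finite ι] [NormedAddCommGroup V] [NormedSpace ℝ V]

theorem exists_translates_norm_le_of_basis (b : Basis ι ℝ V) :
    ∃ P : ℝ, ∀ x y, ∃ c ∈ Submodule.span ℤ (range b), ∃ c' ∈ Submodule.span ℤ (range b),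
      ‖x + c‖ ≤ P ∧ ‖y + c'‖ ≤ P ∧ dist (x + c) (y + c') ≤ dist x y := by
  have := Fintype.ofFinite ι
  set R := ∑ i, ‖b i‖
  have hreduce : ∀ x, ∃ c ∈ Submodule.span ℤ (range b), ‖x + c‖ ≤ R := fun x =>
    ⟨-(ZSpan.floor b x : V), neg_mem (ZSpan.floor b x).2, by
      simpa [ZSpan.fract_apply, sub_eq_add_neg] using ZSpan.norm_fract_le (K := ℝ) b x⟩
  have hR : 0 ≤ R := Finset.sum_nonneg fun i _ => norm_nonneg (b i)
  refine ⟨3 * R, fun x y => ?_⟩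
  obtain ⟨c, hc, hxc⟩ := hreduce x
  obtain ⟨c', hc', hyc'⟩ := hreduce y
  rcases le_total (dist x y) (2 * R) with hnear | hfar
  · refine ⟨c, hc, c, hc, by linarith, ?_, (dist_add_right x y c).le⟩
    have hy : ‖y + c‖ ≤ ‖x + c‖ + dist x y := by
      rw [← dist_add_right x y c, dist_eq_norm']
      exact norm_le_norm_add_norm_sub' _ _
    linarith
  · exact ⟨c, hc, c', hc', by linarith, by linarith,
      (dist_le_norm_add_norm _ _).trans (by linarith)⟩

theorem exists_isCompact_twoPointFun_le (b : Basis ι ℝ V) :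
    ∃ K : Set V, IsCompact K ∧ ∀ (f : V → ℝ) (ψ : ℝ → ℝ), (∀ k, Periodic f (b k)) →
      MonotoneOn ψ (Ici 0) → ∀ q, ∃ q' ∈ K ×ˢ K, twoPointFun f ψ q ≤ twoPointFun f ψ q' := by
  have := Module.Finite.of_basis b
  obtain ⟨P, hP⟩ := exists_translates_norm_le_of_basis b
  refine ⟨Metric.closedBall 0 P, isCompact_closedBall 0 P, fun f ψ hf hψ => ?_⟩
  rintro ⟨x, y⟩
  obtain ⟨c, hc, c', hc', hx, hy, hdist⟩ := hP x y
  refine ⟨(x + c, y + c'), by simpa using ⟨hx, hy⟩, ?_⟩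
  simp only [twoPointFun, periodic_of_mem_span_int hf hc x, periodic_of_mem_span_int hf hc' y]
  exact sub_le_sub_left (hψ dist_nonneg dist_nonneg hdist) _

end Periodicity

section Comparison

variable {X : Type*} [PseudoMetricSpace X] {u : X → ℝ → ℝ} {Φ : ℝ → ℝ → ℝ} {T M : ℝ}

theorem eventually_twoPointFun_le {K : Set X} (hK : IsCompact K) (hT : 0 < T)
    (hu : ContinuousOn (fun q : X × ℝ => u q.1 q.2) (K ×ˢ Icc 0 T))
    (hosc : ∀ t ∈ Ioc 0 T, ∀ x y, u y t - u x t ≤ M)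
    (hmono : ∀ t > 0, MonotoneOn (fun z => Φ z t) (Ici 0)) (hzero : ∀ t > 0, Φ 0 t = 0)
    (hinit : ∀ z > 0, Tendsto (Φ z) (𝓝[>] 0) (𝓝 M)) {ε : ℝ} (hε : 0 < ε) :
    ∀ᶠ t in 𝓝[>] 0, ∀ q ∈ K ×ˢ K, twoPointFun (fun x => u x t) (fun z => Φ z t) q ≤ ε := by
  obtain ⟨δ, hδ, hunif⟩ := Metric.uniformContinuousOn_iff.1
    ((hK.prod isCompact_Icc).uniformContinuousOn_of_continuous hu) ε hε
  filter_upwards [(hinit (δ / 2) (by positivity)).eventually (lt_mem_nhds (sub_lt_self M hε)),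
    Ioc_mem_nhdsGT hT] with t hΦ ht
  rintro ⟨x, y⟩ ⟨hx, hy⟩
  simp only [twoPointFun]
  rcases le_total (dist x y) (δ / 2) with hnear | hfar
  · have hu' : dist (u y t) (u x t) < ε :=
      hunif (y, t) ⟨hy, Ioc_subset_Icc_self ht⟩ (x, t) ⟨hx, Ioc_subset_Icc_self ht⟩ (by
        rw [Prod.dist_eq, dist_self, dist_comm y x]
        exact max_lt (by linarith) hδ)
    have hΦ_nonneg := hmono t ht.1 self_mem_Ici dist_nonneg (dist_nonneg (x := x) (y := y))
    simp only [hzero t ht.1] at hΦ_nonneg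
    linarith [(le_abs_self _).trans_lt (Real.dist_eq _ _ ▸ hu')]
  · have hΦ_le := hmono t ht.1 (half_pos hδ).le dist_nonneg hfar
    simp only at hΦ_le
    linarith [hosc t ht x y]

theorem continuousOn_twoPointFun (hu : ContinuousOn (fun q : X × ℝ => u q.1 q.2) (univ ×ˢ Icc 0 T))
    (hΦ : ContinuousOn (fun q : ℝ × ℝ => Φ q.1 q.2) (Ici 0 ×ˢ Ioi 0)) :
    ContinuousOn (fun q : (X × X) × ℝ => twoPointFun (fun x => u x q.2) (fun z => Φ z q.2) q.1)
      (univ ×ˢ Ioc 0 T) := by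
  have hu' {g : (X × X) × ℝ → X} (hg : Continuous g) :
      ContinuousOn (fun q => u (g q) q.2) (univ ×ˢ Ioc 0 T) :=
    hu.comp (hg.prodMk continuous_snd).continuousOn fun q hq =>
      ⟨mem_univ _, Ioc_subset_Icc_self hq.2⟩
  exact ((hu' (by fun_prop)).sub (hu' (by fun_prop))).sub
    (hΦ.comp (f := fun q : (X × X) × ℝ => (dist q.1.1 q.1.2, q.2)) (by fun_prop)
      fun _ hq => ⟨dist_nonneg, hq.2.1⟩)

theorem sub_le_of_deriv_le_at_max {ι V : Type*} [Finite ι] [NormedAddCommGroup V]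
    [NormedSpace ℝ V] {u ut : V → ℝ → ℝ} {Φt : ℝ → ℝ → ℝ} (b : Basis ι ℝ V)
    (hu : ContinuousOn (fun q : V × ℝ => u q.1 q.2) (univ ×ˢ Icc 0 T))
    (hut : ∀ x, ∀ t ∈ Ioc 0 T, HasDerivWithinAt (u x) (ut x t) (Icc 0 T) t)
    (hper : ∀ k, ∀ t ∈ Ioc 0 T, Periodic (fun x => u x t) (b k))
    (hosc : ∀ t ∈ Ioc 0 T, ∀ x y, u y t - u x t ≤ M)
    (hΦ : ContinuousOn (fun q : ℝ × ℝ => Φ q.1 q.2) (Ici 0 ×ˢ Ioi 0))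
    (hΦt : ∀ z > 0, ∀ t > 0, HasDerivAt (Φ z) (Φt z t) t)
    (hmono : ∀ t > 0, MonotoneOn (fun z => Φ z t) (Ici 0)) (hzero : ∀ t > 0, Φ 0 t = 0)
    (hinit : ∀ z > 0, Tendsto (Φ z) (𝓝[>] 0) (𝓝 M))
    (hmax : ∀ t ∈ Ioc 0 T, ∀ x y, x ≠ y →
      IsLocalMax (twoPointFun (fun x => u x t) fun z => Φ z t) (x, y) →
      ut y t - ut x t ≤ Φt (dist x y) t)
    (x y : V) {t : ℝ} (ht : t ∈ Ioc 0 T) : u y t - u x t ≤ Φ (dist x y) t := by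
  obtain ⟨K, hK, hdom⟩ := exists_isCompact_twoPointFun_le b
  have hdom : ∀ t ∈ Ioc 0 T, ∀ q, ∃ q' ∈ K ×ˢ K, twoPointFun (fun x => u x t) (fun z => Φ z t) q ≤
      twoPointFun (fun x => u x t) (fun z => Φ z t) q' := fun t ht =>
    hdom _ _ (fun k => hper k t ht) (hmono t ht.1)
  have hnonpos : ∀ q ∈ K ×ˢ K, ∀ t ∈ Ioc 0 T,
      twoPointFun (fun x => u x t) (fun z => Φ z t) q ≤ 0 := by
    refine nonpos_of_deriv_nonpos_at_positive_max (hK.prod hK)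
      ((continuousOn_twoPointFun hu hΦ).mono (prod_mono_left (subset_univ _)))
      (fun ε hε => eventually_twoPointFun_le hK (ht.1.trans_le ht.2)
        (hu.mono (prod_mono_left (subset_univ _))) hosc hmono hzero hinit hε) ?_
    rintro ⟨x, y⟩ - t ht hpos hKmax
    have hxy : x ≠ y := by
      rintro rfl
      simp [twoPointFun, hzero t ht.1] at hpos
    have hlocal : IsLocalMax (twoPointFun (fun x => u x t) fun z => Φ z t) (x, y) :=
      .of_forall fun q => by
        obtain ⟨q', hq', hle⟩ := hdom t ht q
        exact hle.trans (hKmax hq')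
    exact ⟨ut y t - ut x t - Φt (dist x y) t, sub_nonpos.2 (hmax t ht x y hxy hlocal),
      ((hut y t ht).fun_sub (hut x t ht)).fun_sub
        (hΦt _ (dist_pos.2 hxy) t ht.1).hasDerivWithinAt⟩
  obtain ⟨q, hq, hle⟩ := hdom t ht (x, y)
  exact sub_nonpos.1 (hle.trans (hnonpos q hq t ht))

end Comparison

section Barrier

/-- `φ`, with partial derivatives `φt`, `φz`, `φzz`, is a barrier of height `m` for the reduced
one-dimensional equation `φ_t = 4 a(|φ_z|) φ_zz` on `(0,∞) × (0,∞)`: it is increasing in `z`,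
vanishes at `z = 0`, and tends to `m` as `t → 0⁺`. -/
structure IsBarrier (a : ℝ → ℝ) (m : ℝ) (φ φt φz φzz : ℝ → ℝ → ℝ) : Prop where
  continuousOn : ContinuousOn (fun q : ℝ × ℝ => φ q.1 q.2) (Ici 0 ×ˢ Ioi 0)
  hasDerivAt_time : ∀ z > 0, ∀ t > 0, HasDerivAt (φ z) (φt z t) t
  hasDerivAt_space : ∀ z > 0, ∀ t > 0, HasDerivAt (fun z => φ z t) (φz z t) z
  hasDerivAt_space_space : ∀ z > 0, ∀ t > 0, HasDerivAt (fun z => φz z t) (φzz z t) z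
  pos_space_deriv : ∀ z > 0, ∀ t > 0, 0 < φz z t
  equation : ∀ z > 0, ∀ t > 0, φt z t = 4 * a |φz z t| * φzz z t
  tendsto_initial : ∀ z > 0, Tendsto (φ z) (𝓝[>] 0) (𝓝 m)
  zero_boundary : ∀ t > 0, φ 0 t = 0

namespace IsBarrier

variable {a : ℝ → ℝ} {m : ℝ} {φ φt φz φzz : ℝ → ℝ → ℝ}

theorem monotoneOn (hφ : IsBarrier a m φ φt φz φzz) {t : ℝ} (ht : 0 < t) :
    MonotoneOn (fun z => φ z t) (Ici 0) := by
  have hderiv : ∀ z ∈ interior (Ici (0 : ℝ)), HasDerivWithinAt (fun z => φ z t) (φz z t)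
      (interior (Ici 0)) z := fun z hz =>
    (hφ.hasDerivAt_space z (by simpa using hz) t ht).hasDerivWithinAt
  exact monotoneOn_of_hasDerivWithinAt_nonneg (convex_Ici 0)
    (hφ.continuousOn.comp (f := fun z : ℝ => (z, t)) (by fun_prop) fun z hz => ⟨hz, ht⟩) hderiv
    fun z hz => (hφ.pos_space_deriv z (by simpa using hz) t ht).le

theorem rescale (hφ : IsBarrier a m φ φt φz φzz) {M : ℝ} (hM : 0 < M) :
    IsBarrier a (M * m) (fun z t => M * φ (z / M) (t / M ^ 2))
      (fun z t => φt (z / M) (t / M ^ 2) / M) (fun z t => φz (z / M) (t / M ^ 2))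
      (fun z t => φzz (z / M) (t / M ^ 2) / M) where
  continuousOn := continuousOn_const.mul <|
    hφ.continuousOn.comp (f := fun q : ℝ × ℝ => (q.1 / M, q.2 / M ^ 2)) (by fun_prop)
      fun _ hq => ⟨div_nonneg hq.1 hM.le, div_pos hq.2 (pow_pos hM 2)⟩
  hasDerivAt_time z hz t ht :=
    (((hφ.hasDerivAt_time (z / M) (by positivity) (t / M ^ 2) (by positivity)).comp t
      ((hasDerivAt_id' t).div_const (M ^ 2))).const_mul M).congr_deriv (by field_simp)
  hasDerivAt_space z hz t ht :=
    ((HasDerivAt.comp (h₂ := fun z => φ z (t / M ^ 2)) z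
      (hφ.hasDerivAt_space (z / M) (by positivity) (t / M ^ 2) (by positivity))
      ((hasDerivAt_id' z).div_const M)).const_mul M).congr_deriv (by field_simp)
  hasDerivAt_space_space z hz t ht :=
    (HasDerivAt.comp (h₂ := fun z => φz z (t / M ^ 2)) z
      (hφ.hasDerivAt_space_space (z / M) (by positivity) (t / M ^ 2) (by positivity))
      ((hasDerivAt_id' z).div_const M)).congr_deriv (by field_simp)
  pos_space_deriv z hz t ht := hφ.pos_space_deriv _ (div_pos hz hM) _ (by positivity)
  equation z hz t ht := by
    rw [hφ.equation (z / M) (by positivity) (t / M ^ 2) (by positivity), mul_div_assoc]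
  tendsto_initial z hz := by
    have hscale : Tendsto (fun t : ℝ => t / M ^ 2) (𝓝[>] 0) (𝓝[>] 0) :=
      tendsto_nhdsWithin_iff.2 ⟨((continuous_id.div_const (M ^ 2)).tendsto' 0 0
        (zero_div _)).mono_left nhdsWithin_le_nhds,
        eventually_mem_nhdsWithin.mono fun t ht => div_pos ht (pow_pos hM 2)⟩
    exact ((hφ.tendsto_initial (z / M) (by positivity)).comp hscale).const_mul M
  zero_boundary t ht := by
    rw [zero_div, hφ.zero_boundary (t / M ^ 2) (by positivity), mul_zero]

end IsBarrier

end Barrier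

section Solution

theorem contDiff_of_contDiffOn_univ_prod {V W F : Type*} [NormedAddCommGroup V] [NormedSpace ℝ V]
    [NormedAddCommGroup W] [NormedSpace ℝ W] [NormedAddCommGroup F] [NormedSpace ℝ F]
    {n : WithTop ℕ∞} {u : V → W → F} {s : Set W}
    (hu : ContDiffOn ℝ n (fun q : V × W => u q.1 q.2) (univ ×ˢ s)) {t : W} (ht : t ∈ s) :
    ContDiff ℝ n fun x => u x t :=
  contDiffOn_univ.1 <| hu.comp (f := fun x => (x, t)) (by fun_prop) fun _ _ => ⟨mem_univ _, ht⟩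

variable {ι : Type*} [Fintype ι] [DecidableEq ι]

/-- `u` is a classical solution of `u_t = Σ A(Du,t)_{ij} D_{ij}u + b(Du,t)` on `ℝⁿ × (0,T]`,
continuous up to `t = 0`, with time derivative `ut` (one-sided at `t = T`), gradient `gu` and
Hessian `hu`. -/
structure IsClassicalSolution (A : (ι → ℝ) → ℝ → Matrix ι ι ℝ) (b : (ι → ℝ) → ℝ → ℝ) (T : ℝ)
    (u ut : (ι → ℝ) → ℝ → ℝ) (gu : (ι → ℝ) → ℝ → ι → ℝ) (hu : (ι → ℝ) → ℝ → Matrix ι ι ℝ) :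
    Prop where
  continuousOn : ContinuousOn (fun q : (ι → ℝ) × ℝ => u q.1 q.2) (univ ×ˢ Icc 0 T)
  contDiff : ∀ t ∈ Ioc 0 T, ContDiff ℝ 2 fun x => u x t
  hasDerivWithinAt : ∀ x, ∀ t ∈ Ioc 0 T, HasDerivWithinAt (u x) (ut x t) (Icc 0 T) t
  hasLineDerivAt : ∀ x, ∀ t ∈ Ioc 0 T, ∀ i,
    HasLineDerivAt ℝ (fun x => u x t) (gu x t i) x (Pi.single i 1)
  hasLineDerivAt_gradient : ∀ x, ∀ t ∈ Ioc 0 T, ∀ i j,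
    HasLineDerivAt ℝ (fun x => gu x t j) (hu x t i j) x (Pi.single i 1)
  equation : ∀ x, ∀ t ∈ Ioc 0 T,
    ut x t = ∑ i, ∑ j, A (gu x t) t i j * hu x t i j + b (gu x t) t

namespace IsClassicalSolution

variable {A : (ι → ℝ) → ℝ → Matrix ι ι ℝ} {b : (ι → ℝ) → ℝ → ℝ} {T : ℝ}
  {u ut : (ι → ℝ) → ℝ → ℝ} {gu : (ι → ℝ) → ℝ → ι → ℝ} {hu : (ι → ℝ) → ℝ → Matrix ι ι ℝ}
  {αt : ℝ → ℝ}

theorem deriv_sub_le_of_isLocalMax_twoPointFun (hsol : IsClassicalSolution A b T u ut gu hu)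
    {t : ℝ} (ht : t ∈ Ioc 0 T) (hA : ∀ p, (A p t).PosSemidef) (hαt : ∀ s > 0, 0 ≤ αt s)
    (hα : ∀ p ≠ 0, αt √(∑ i, p i ^ 2) ≤ minEllipticity (A p t) p)
    {ψ ψ' : ℝ → ℝ} {c : ℝ} {x y : EuclideanSpace ℝ ι} (hxy : x ≠ y)
    (hmax : IsLocalMax (twoPointFun (fun z : EuclideanSpace ℝ ι => u z.ofLp t) ψ) (x, y))
    (hψ : ∀ᶠ z in 𝓝 (dist x y), HasDerivAt ψ (ψ' z) z) (hψ' : HasDerivAt ψ' c (dist x y))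
    (hψ'pos : 0 < ψ' (dist x y)) :
    ut y.ofLp t - ut x.ofLp t ≤ 4 * αt (ψ' (dist x y)) * c := by
  let f (z : EuclideanSpace ℝ ι) : ℝ := u z.ofLp t
  let g (z : EuclideanSpace ℝ ι) : ι → ℝ := gu z.ofLp t
  let h (z : EuclideanSpace ℝ ι) : Matrix ι ι ℝ := hu z.ofLp t
  have hf : ContDiff ℝ 2 f := (hsol.contDiff t ht).comp PiLp.contDiff_ofLp
  have hg (z i) : HasLineDerivAt ℝ f (g z i) z (EuclideanSpace.single i 1) :=
    hsol.hasLineDerivAt z.ofLp t ht i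
  have hh (z i j) : HasLineDerivAt ℝ (fun z => g z j) (h z i j) z (EuclideanSpace.single i 1) :=
    hsol.hasLineDerivAt_gradient z.ofLp t ht i j
  have hf1 : Differentiable ℝ f := hf.differentiable two_ne_zero
  obtain ⟨hgx, hgy⟩ :=
    partialDeriv_eq_of_isLocalMax_twoPointFun hmax hxy hf1 hg hψ.self_of_nhds
  have hgxy : g x = g y := hgx.trans hgy.symm
  have hsq : ∑ i, g y i ^ 2 = ψ' (dist x y) ^ 2 :=
    sum_sq_partialDeriv_of_isLocalMax_twoPointFun hmax hxy hf1 hg hψ.self_of_nhds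
  have hne : g y ≠ 0 := fun hzero => (pow_pos hψ'pos 2).ne (by simpa [hzero] using hsq)
  have hαy : αt (ψ' (dist x y)) ≤ minEllipticity (A (g y) t) (g y) := by
    simpa only [hsq, Real.sqrt_sq hψ'pos.le] using hα (g y) hne
  calc ut y.ofLp t - ut x.ofLp t
      = (∑ i, ∑ j, A (g y) t i j * h y i j + b (g y) t) -
          (∑ i, ∑ j, A (g x) t i j * h x i j + b (g x) t) :=
        congrArg₂ (· - ·) (hsol.equation _ t ht) (hsol.equation _ t ht)
    _ = ∑ i, ∑ j, A (g y) t i j * (h y i j - h x i j) := by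
        simp only [hgxy, mul_sub, Finset.sum_sub_distrib, add_sub_add_right_eq_sub]
    _ ≤ 4 * αt (ψ' (dist x y)) * c :=
        sum_mul_sub_le_of_isLocalMax_twoPointFun (hA _) (hαt _ hψ'pos) hαy hf hg hh hmax hxy hψ hψ'
          hψ'pos.ne'

theorem sub_le_of_isBarrier (hsol : IsClassicalSolution A b T u ut gu hu)
    (hA : ∀ p, ∀ t ∈ Ioc 0 T, (A p t).PosSemidef) (hαt : ∀ s > 0, 0 ≤ αt s)
    (hα : ∀ p ≠ 0, ∀ t ∈ Ioc 0 T, αt √(∑ i, p i ^ 2) ≤ minEllipticity (A p t) p)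
    {γ : ι → ι → ℝ} (hγ : LinearIndependent ℝ γ)
    (hper : ∀ k, ∀ t ∈ Ioc 0 T, Periodic (fun x => u x t) (γ k)) {M : ℝ}
    (hosc : ∀ t ∈ Ioc 0 T, ∀ x y, u y t - u x t ≤ M) {φ φt φz φzz : ℝ → ℝ → ℝ}
    (hφ : IsBarrier αt M φ φt φz φzz) (x y : ι → ℝ) {t : ℝ} (ht : t ∈ Ioc 0 T) :
    u y t - u x t ≤ φ √(∑ i, (y i - x i) ^ 2) t := by
  let basis : Basis ι ℝ (EuclideanSpace ℝ ι) :=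
    (basisOfLinearIndependentOfCardEqFinrank' γ hγ (by simp)).map (WithLp.linearEquiv 2 ℝ _).symm
  have hbasis (k : ι) : (basis k).ofLp = γ k := by simp [basis]
  have hle := sub_le_of_deriv_le_at_max (u := fun z : EuclideanSpace ℝ ι => u z.ofLp)
    (ut := fun z => ut z.ofLp) basis
    (hsol.continuousOn.comp (f := fun q : EuclideanSpace ℝ ι × ℝ => (q.1.ofLp, q.2)) (by fun_prop)
      fun _ hq => ⟨mem_univ _, hq.2⟩)
    (fun z => hsol.hasDerivWithinAt z.ofLp)
    (fun k t ht z => by simpa [hbasis] using hper k t ht z.ofLp)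
    (fun t ht z w => hosc t ht z.ofLp w.ofLp)
    hφ.continuousOn hφ.hasDerivAt_time (fun t => hφ.monotoneOn) hφ.zero_boundary hφ.tendsto_initial
    (fun t ht z w hzw hmax => ?_) (WithLp.toLp 2 x) (WithLp.toLp 2 y) ht
  · simpa [dist_eq_norm', EuclideanSpace.norm_eq] using hle
  · have hd : 0 < dist z w := dist_pos.2 hzw
    rw [hφ.equation _ hd t ht.1, abs_of_pos (hφ.pos_space_deriv _ hd t ht.1)]
    exact hsol.deriv_sub_le_of_isLocalMax_twoPointFun ht (fun p => hA p t ht) hαt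
      (fun p hp => hα p hp t ht) hzw hmax
      ((lt_mem_nhds hd).mono fun s hs => hφ.hasDerivAt_space s hs t ht.1)
      (hφ.hasDerivAt_space_space _ hd t ht.1) (hφ.pos_space_deriv _ hd t ht.1)

end IsClassicalSolution

end Solution

theorem periodic_modulus_estimate_higher_dim_general {ι : Type*} [Fintype ι] [DecidableEq ι]
    {T M : ℝ} (hM : 0 < M) {A : (ι → ℝ) → ℝ → Matrix ι ι ℝ}
    (hA : ∀ p, ∀ t ∈ Ioc 0 T, (A p t).PosSemidef) {b : (ι → ℝ) → ℝ → ℝ}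
    {αt : ℝ → ℝ} (hαt : ∀ s > 0, 0 ≤ αt s)
    (hα : ∀ p ≠ 0, ∀ t ∈ Ioc 0 T, αt √(∑ i, p i ^ 2) ≤ minEllipticity (A p t) p)
    {u ut : (ι → ℝ) → ℝ → ℝ} {gu : (ι → ℝ) → ℝ → ι → ℝ} {hu : (ι → ℝ) → ℝ → Matrix ι ι ℝ}
    (hsol : IsClassicalSolution A b T u ut gu hu) {γ : ι → ι → ℝ} (hγ : LinearIndependent ℝ γ)
    (hper : ∀ k, ∀ t ∈ Ioc 0 T, Periodic (fun x => u x t) (γ k))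
    (hosc : ∀ t ∈ Ioc 0 T, ∀ x y, u y t - u x t ≤ M) {φ φt φz φzz : ℝ → ℝ → ℝ}
    (hφ : IsBarrier αt 1 φ φt φz φzz) (x y : ι → ℝ) {t : ℝ} (ht : t ∈ Ioc 0 T) :
    |u y t - u x t| ≤ M * φ (√(∑ i, (y i - x i) ^ 2) / M) (t / M ^ 2) := by
  have hle (x y : ι → ℝ) : u y t - u x t ≤ M * φ (√(∑ i, (y i - x i) ^ 2) / M) (t / M ^ 2) :=
    hsol.sub_le_of_isBarrier hA hαt hα hγ hper hosc (mul_one M ▸ hφ.rescale hM) x y ht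
  refine abs_sub_le_iff.2 ⟨hle x y, ?_⟩
  simpa only [sub_sq_comm] using hle y x

/-- Modulus-of-continuity estimate for periodic solutions of
`u_t = Σ A(Du,t)_{ij} D_{ij}u + b(Du,t)` in higher dimensions, via a barrier for
the reduced one-dimensional equation `φ_t = 4 α̃(|φ_z|) φ_{zz}`. -/
theorem periodic_modulus_estimate_higher_dim
    (n : ℕ) (hn : 1 ≤ n) (T M : ℝ) (hT : 0 < T) (hM : 0 < M)
    (A : (Fin n → ℝ) → ℝ → Fin n → Fin n → ℝ)
    (hA_smooth : ∀ i j : Fin n,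
      ContDiffOn ℝ (⊤ : ℕ∞) (fun z : (Fin n → ℝ) × ℝ => A z.1 z.2 i j)
        (Set.univ ×ˢ Set.Icc 0 T))
    (hA_symm : ∀ p : Fin n → ℝ, ∀ t ∈ Set.Icc (0:ℝ) T, ∀ i j, A p t i j = A p t j i)
    (hA_psd : ∀ p : Fin n → ℝ, ∀ t ∈ Set.Icc (0:ℝ) T, ∀ v : Fin n → ℝ,
      0 ≤ ∑ i, ∑ j, v i * A p t i j * v j)
    (b : (Fin n → ℝ) → ℝ → ℝ)
    (hb_cont : ContinuousOn (fun z : (Fin n → ℝ) × ℝ => b z.1 z.2)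
      (Set.univ ×ˢ Set.Icc 0 T))
    (αt : ℝ → ℝ) (hαt_pos : ∀ s : ℝ, 0 < s → 0 < αt s)
    (hα : ∀ p : Fin n → ℝ, p ≠ 0 → ∀ t ∈ Set.Icc (0:ℝ) T,
      (∑ i, p i ^ 2) *
        sInf {r : ℝ | ∃ v : Fin n → ℝ, (∑ i, v i * p i) ≠ 0 ∧
          r = (∑ i, ∑ j, v i * A p t i j * v j) / (∑ i, v i * p i) ^ 2}
        = αt (Real.sqrt (∑ i, p i ^ 2)))
    (u ut : (Fin n → ℝ) → ℝ → ℝ)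
    (gu : (Fin n → ℝ) → ℝ → Fin n → ℝ)
    (hu : (Fin n → ℝ) → ℝ → Fin n → Fin n → ℝ)
    (hu_smooth : ContDiffOn ℝ (⊤ : ℕ∞) (fun z : (Fin n → ℝ) × ℝ => u z.1 z.2)
      (Set.univ ×ˢ Set.Icc 0 T))
    (hut : ∀ x : Fin n → ℝ, ∀ t ∈ Set.Icc (0:ℝ) T,
      HasDerivWithinAt (fun s => u x s) (ut x t) (Set.Icc 0 T) t)
    (hgu : ∀ x : Fin n → ℝ, ∀ t ∈ Set.Icc (0:ℝ) T, ∀ i,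
      HasDerivAt (fun s : ℝ => u (x + s • (Pi.single i 1 : Fin n → ℝ)) t) (gu x t i) 0)
    (hhu : ∀ x : Fin n → ℝ, ∀ t ∈ Set.Icc (0:ℝ) T, ∀ i j,
      HasDerivAt (fun s : ℝ => gu (x + s • (Pi.single i 1 : Fin n → ℝ)) t j) (hu x t i j) 0)
    (hpde : ∀ x : Fin n → ℝ, ∀ t ∈ Set.Icc (0:ℝ) T,
      ut x t = (∑ i, ∑ j, A (gu x t) t i j * hu x t i j) + b (gu x t) t)
    (γ : Fin n → Fin n → ℝ) (hγ : LinearIndependent ℝ γ)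
    (hper : ∀ k : Fin n, ∀ x : Fin n → ℝ, ∀ t : ℝ, u (x + γ k) t = u x t)
    (hosc : ∀ t ∈ Set.Icc (0:ℝ) T, ∀ x y : Fin n → ℝ, u x t - u y t ≤ M)
    (φ φt φz φzz : ℝ → ℝ → ℝ)
    (hφ_cont : ContinuousOn (fun z : ℝ × ℝ => φ z.1 z.2) (Set.Ici 0 ×ˢ Set.Ioi 0))
    (hφt : ∀ z ∈ Set.Ioi (0:ℝ), ∀ t ∈ Set.Ioi (0:ℝ), HasDerivAt (fun s => φ z s) (φt z t) t)
    (hφz : ∀ z ∈ Set.Ioi (0:ℝ), ∀ t ∈ Set.Ioi (0:ℝ), HasDerivAt (fun w => φ w t) (φz z t) z)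
    (hφzz : ∀ z ∈ Set.Ioi (0:ℝ), ∀ t ∈ Set.Ioi (0:ℝ), HasDerivAt (fun w => φz w t) (φzz z t) z)
    (hφt_cont : ContinuousOn (fun z : ℝ × ℝ => φt z.1 z.2) (Set.Ioi 0 ×ˢ Set.Ioi 0))
    (hφz_cont : ContinuousOn (fun z : ℝ × ℝ => φz z.1 z.2) (Set.Ioi 0 ×ˢ Set.Ioi 0))
    (hφzz_cont : ContinuousOn (fun z : ℝ × ℝ => φzz z.1 z.2) (Set.Ioi 0 ×ˢ Set.Ioi 0))
    (hφz_pos : ∀ z ∈ Set.Ioi (0:ℝ), ∀ t ∈ Set.Ioi (0:ℝ), 0 < φz z t)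
    (hφpde : ∀ z ∈ Set.Ioi (0:ℝ), ∀ t ∈ Set.Ioi (0:ℝ),
      φt z t = 4 * αt |φz z t| * φzz z t)
    (hbc1 : ∀ z : ℝ, 0 < z →
      Filter.Tendsto (fun t => φ z t) (nhdsWithin 0 (Set.Ioi 0)) (nhds 1))
    (hbc2 : ∀ t : ℝ, 0 < t → φ 0 t = 0)
    (hbc3 : ∀ t : ℝ, 0 < t →
      Filter.Tendsto (fun z => φ z t) Filter.atTop (nhds 1)) :
    ∀ x y : Fin n → ℝ, ∀ t ∈ Set.Ioc (0:ℝ) T,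
      |u y t - u x t| ≤
        M * φ (Real.sqrt (∑ i, (y i - x i) ^ 2) / M) (t / M ^ 2) :=
  fun x y _ ht => periodic_modulus_estimate_higher_dim_general hM
    (fun p t ht => posSemidef_of_sum_nonneg (hA_symm p t (Ioc_subset_Icc_self ht))
      (hA_psd p t (Ioc_subset_Icc_self ht)))
    (fun s hs => (hαt_pos s hs).le) (fun p hp t ht => (hα p hp t (Ioc_subset_Icc_self ht)).ge)
    { continuousOn := hu_smooth.continuousOn
      contDiff := fun t ht => contDiff_of_contDiffOn_univ_prod
        (hu_smooth.of_le (WithTop.coe_le_coe.2 le_top)) (Ioc_subset_Icc_self ht)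
      hasDerivWithinAt := fun x t ht => hut x t (Ioc_subset_Icc_self ht)
      hasLineDerivAt := fun x t ht => hgu x t (Ioc_subset_Icc_self ht)
      hasLineDerivAt_gradient := fun x t ht => hhu x t (Ioc_subset_Icc_self ht)
      equation := fun x t ht => hpde x t (Ioc_subset_Icc_self ht) }
    hγ (fun k _ _ x => hper k x _) (fun t ht x y => hosc t (Ioc_subset_Icc_self ht) y x)
    ⟨hφ_cont, hφt, hφz, hφzz, hφz_pos, hφpde, hbc1, hbc2⟩ x y ht
end

section
/- Let Ω ⊂ ℝⁿ be open, bounded and convex, let T > 0, α ∈ (0,1], c > 0, and let C : (0,∞) → (0,∞) be nonincreasing. Let f : Ω × (0,T] → ℝ be differentiable in space and in time and suppose: (i) for every x₀ ∈ ∂Ω, every r > 0 and every t₀ > r², the oscillation of f over the set {(x,t) ∈ Ω × (0,T] : |x−x₀| < r, t₀ − r² < t ≤ t₀} is at most C(t₀)·r^α; (ii) for all (x,t) ∈ Ω × (0,T], |∇f(x,t)| ≤ c·(dist(x,∂Ω)^{−2} + t^{−1})^{1/2} and |∂_t f(x,t)| ≤ c·(dist(x,∂Ω)^{−2} + t^{−1}).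 Then, with α' = α/(α+1), for every τ ∈ (0,T] there exists C' > 0 (depending only on τ, the diameter of Ω, c, α, and the function C) such that for all x, y ∈ Ω and all s, t ∈ [τ,T]: |f(x,t) − f(y,s)| ≤ C'·(|x−y| + |t−s|^{1/2})^{α'}. -/
/-!
Write `ρ = |x - y| + |t - s|^(1/2)` for the parabolic distance. Suppose `ρ ≤ 1` and compare
`dist(x, ∂Ω)` with the scale `δ = ρ^(1/(α+1)) ≥ ρ`. Within distance `2δ` of the boundary, both
points lie in a boundary cylinder of radius comparable to `δ`, where `f` oscillates by `O(δ^α)`.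
Otherwise the box spanned by `x` and `y` stays at distance `δ` from the boundary, and the
derivative bounds give `O(ρ/δ + ρ²/δ²) = O(ρ/δ)`. The scale is chosen so that both errors equal
`ρ^(α/(α+1))`. When `ρ > 1` only a bound on the total oscillation is needed: since the top `t₀` of a
boundary cylinder may exceed `T`, a single cylinder contains all of `Ω × [τ, T]`.
-/

open Set Metric

section EuclideanDistance

variable {ι : Type*} [Fintype ι]

/-- The Euclidean distance on `ι → ℝ`, whose own metric is the sup metric. -/
noncomputable def euclideanDist (x y : ι → ℝ) : ℝ :=
  √(∑ i, (x i - y i) ^ 2)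

theorem euclideanDist_eq_dist_toLp (x y : ι → ℝ) :
    euclideanDist x y = dist (WithLp.toLp 2 x) (WithLp.toLp 2 y) := by
  simp only [euclideanDist, EuclideanSpace.dist_eq, Real.dist_eq, sq_abs]

theorem euclideanDist_nonneg (x y : ι → ℝ) : 0 ≤ euclideanDist x y :=
  Real.sqrt_nonneg _

theorem euclideanDist_comm (x y : ι → ℝ) : euclideanDist x y = euclideanDist y x := by
  simp only [euclideanDist_eq_dist_toLp, dist_comm]

theorem euclideanDist_triangle (x y z : ι → ℝ) :
    euclideanDist x z ≤ euclideanDist x y + euclideanDist y z := by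
  simpa only [euclideanDist_eq_dist_toLp] using dist_triangle _ _ _

theorem abs_apply_le_sqrt_sum_sq (v : ι → ℝ) (i : ι) : |v i| ≤ √(∑ j, v j ^ 2) :=
  Real.abs_le_sqrt <|
    Finset.single_le_sum (f := fun j => v j ^ 2) (fun j _ => sq_nonneg (v j)) (Finset.mem_univ i)

theorem dist_le_euclideanDist (x y : ι → ℝ) : dist x y ≤ euclideanDist x y :=
  (dist_pi_le_iff (euclideanDist_nonneg x y)).2 fun i =>
    abs_apply_le_sqrt_sum_sq (fun j => x j - y j) i

theorem sum_abs_sub_le_card_mul_dist (x y : ι → ℝ) :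
    ∑ i, |x i - y i| ≤ Fintype.card ι * dist x y := by
  simpa [dist_eq_norm] using Pi.sum_norm_apply_le_norm (x - y)

theorem euclideanDist_le_card_mul_dist (x y : ι → ℝ) :
    euclideanDist x y ≤ Fintype.card ι * dist x y := by
  refine le_trans (Real.sqrt_le_iff.2 ⟨by positivity, ?_⟩) (sum_abs_sub_le_card_mul_dist x y)
  simpa only [sq_abs] using
    Finset.sum_sq_le_sq_sum_of_nonneg fun i (_ : i ∈ Finset.univ) => abs_nonneg (x i - y i)

/-- The parabolic distance `|x - y| + |t - s|^(1/2)` between the space-time points `(x, t)` and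
`(y, s)`. -/
noncomputable def parabolicDist (x : ι → ℝ) (t : ℝ) (y : ι → ℝ) (s : ℝ) : ℝ :=
  euclideanDist x y + √|t - s|

theorem euclideanDist_le_parabolicDist (x y : ι → ℝ) (t s : ℝ) :
    euclideanDist x y ≤ parabolicDist x t y s :=
  le_add_of_nonneg_right (Real.sqrt_nonneg _)

theorem parabolicDist_nonneg (x y : ι → ℝ) (t s : ℝ) : 0 ≤ parabolicDist x t y s :=
  (euclideanDist_nonneg x y).trans (euclideanDist_le_parabolicDist x y t s)

theorem abs_sub_le_parabolicDist_sq (x y : ι → ℝ) (t s : ℝ) :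
    |t - s| ≤ parabolicDist x t y s ^ 2 :=
  (Real.sqrt_le_left (parabolicDist_nonneg x y t s)).1 <|
    le_add_of_nonneg_left (euclideanDist_nonneg x y)

theorem eq_of_parabolicDist_eq_zero {x y : ι → ℝ} {t s : ℝ} (h : parabolicDist x t y s = 0) :
    x = y ∧ t = s := by
  have hspace := (dist_le_euclideanDist x y).trans (euclideanDist_le_parabolicDist x y t s)
  have htime := abs_sub_le_parabolicDist_sq x y t s
  rw [h] at hspace htime
  exact ⟨dist_le_zero.1 hspace, sub_eq_zero.1 (abs_nonpos_iff.1 (by simpa using htime))⟩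

end EuclideanDistance

section MeanValue

variable {ι : Type*} {F : Type*} [NormedAddCommGroup F]

theorem hasDerivAt_update_of_hasLineDerivAt_single [DecidableEq ι] {𝕜 : Type*}
    [NontriviallyNormedField 𝕜] [NormedSpace 𝕜 F] {f : (ι → 𝕜) → F} {f' : F} {z : ι → 𝕜} {i : ι}
    (hf : HasLineDerivAt 𝕜 f f' z (Pi.single i 1)) :
    HasDerivAt (fun u => f (Function.update z i u)) f' (z i) := by
  unfold HasLineDerivAt at hf
  rw [← sub_self (z i)] at hf
  refine (hf.comp_sub_const (z i) (z i)).congr_of_eventuallyEq (.of_forall fun u => ?_)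
  refine congrArg f (funext fun j => ?_)
  rcases eq_or_ne j i with rfl | hj <;> simp [*]

theorem uIcc_subset_closedBall_dist [Fintype ι] (x y : ι → ℝ) :
    uIcc x y ⊆ closedBall x (dist y x) := by
  intro z hz
  rw [mem_closedBall, dist_comm z, dist_comm y, dist_pi_le_iff dist_nonneg]
  exact fun i => (Real.dist_left_le_of_mem_uIcc ⟨hz.1 i, hz.2 i⟩).trans (dist_le_pi_dist x y i)

-- Change one coordinate at a time: every intermediate point stays in the box `uIcc x y`, so no
-- total differentiability is needed.
theorem norm_sub_le_sum_of_hasLineDerivAt_single [Fintype ι] [DecidableEq ι] [NormedSpace ℝ F]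
    {f : (ι → ℝ) → F} {g : (ι → ℝ) → ι → F} {M : ι → ℝ} {x y : ι → ℝ}
    (hf : ∀ z ∈ uIcc x y, ∀ i, HasLineDerivAt ℝ f (g z i) z (Pi.single i 1))
    (hg : ∀ z ∈ uIcc x y, ∀ i, ‖g z i‖ ≤ M i) :
    ‖f y - f x‖ ≤ ∑ i, M i * |y i - x i| := by
  suffices hS : ∀ S : Finset ι, ‖f (S.piecewise y x) - f x‖ ≤ ∑ i ∈ S, M i * |y i - x i| by
    simpa using hS Finset.univ
  intro S
  induction S using Finset.induction_on with
  | empty => simp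
  | insert a S ha ih =>
    set z := S.piecewise y x with hz
    have hza : z a = x a := Finset.piecewise_eq_of_notMem _ _ _ ha
    have hbox : ∀ u ∈ uIcc (x a) (y a), Function.update z a u ∈ uIcc x y := by
      intro u hu
      rw [← pi_univ_uIcc]
      intro i _
      rcases eq_or_ne i a with rfl | hi
      · simpa using hu
      · by_cases hiS : i ∈ S <;> simp [hz, hi, hiS]
    have hderiv : ∀ u ∈ uIcc (x a) (y a), HasDerivWithinAt (fun v => f (Function.update z a v))
        (g (Function.update z a u) a) (uIcc (x a) (y a)) u := fun u hu => by
      simpa using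
        (hasDerivAt_update_of_hasLineDerivAt_single (hf _ (hbox u hu) a)).hasDerivWithinAt
    have hmove : ‖f ((insert a S).piecewise y x) - f z‖ ≤ M a * |y a - x a| := by
      have := (convex_uIcc (x a) (y a)).norm_image_sub_le_of_norm_hasDerivWithin_le hderiv
        (fun u hu => hg _ (hbox u hu) a) left_mem_uIcc right_mem_uIcc
      rwa [← hza, Function.update_eq_self, hza, ← Finset.piecewise_insert, Real.norm_eq_abs]
        at this
    rw [Finset.sum_insert ha]
    exact (norm_sub_le_norm_sub_add_norm_sub _ (f z) _).trans (add_le_add hmove ih)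

end MeanValue

section Frontier

variable {E : Type*} [NormedAddCommGroup E] [NormedSpace ℝ E] {s : Set E}

theorem frontier_nonempty_of_isBounded [Nontrivial E] (hs : s.Nonempty)
    (hbdd : Bornology.IsBounded s) : (frontier s).Nonempty :=
  nonempty_frontier_iff.2 ⟨hs, fun h => NormedSpace.unbounded_univ ℝ E (h ▸ hbdd)⟩

theorem closedBall_subset_of_lt_infDist_frontier {x : E} {r : ℝ} (hs : IsOpen s) (hx : x ∈ s)
    (hr : 0 ≤ r) (h : r < infDist x (frontier s)) : closedBall x r ⊆ s := by
  refine (convex_closedBall x r).isPreconnected.subset_of_closure_inter_subset hs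
    ⟨x, mem_closedBall_self hr, hx⟩ fun z ⟨hz, hzr⟩ => by_contra fun hzs => ?_
  have hzf : z ∈ frontier s := hs.frontier_eq ▸ ⟨hz, hzs⟩
  exact (disjoint_closedBall_of_lt_infDist h).notMem_of_mem_left hzr hzf

end Frontier

section Estimates

variable {ι : Type*} [Fintype ι] {Ω : Set (ι → ℝ)} {T α c τ δ : ℝ} {C : ℝ → ℝ}
  {f ft : (ι → ℝ) → ℝ → ℝ} {gf : (ι → ℝ) → ℝ → ι → ℝ} {x y : ι → ℝ} {s t : ℝ}

/-- The part in `Ω × (0, T]` of the parabolic cylinder of radius `r` with top centre `(x₀, t₀)`.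
The top `t₀` may exceed `T`. -/
def parabolicCylinder (Ω : Set (ι → ℝ)) (T : ℝ) (x₀ : ι → ℝ) (t₀ r : ℝ) : Set ((ι → ℝ) × ℝ) :=
  {p | p.1 ∈ Ω ∧ p.2 ∈ Ioc 0 T ∧ euclideanDist p.1 x₀ < r ∧ p.2 ∈ Ioc (t₀ - r ^ 2) t₀}

/-- The boundary Hölder estimate: `f` oscillates by at most `C t₀ * r ^ α` over each parabolic
cylinder of radius `r` with top centre `(x₀, t₀)`, where `x₀ ∈ ∂Ω` and `r ^ 2 < t₀`. -/
def BoundaryOscillationLE (Ω : Set (ι → ℝ)) (T α : ℝ) (C : ℝ → ℝ) (f : (ι → ℝ) → ℝ → ℝ) : Prop :=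
  ∀ x₀ ∈ frontier Ω, ∀ r : ℝ, 0 < r → ∀ t₀ : ℝ, r ^ 2 < t₀ →
    ∀ p ∈ parabolicCylinder Ω T x₀ t₀ r, ∀ q ∈ parabolicCylinder Ω T x₀ t₀ r,
      f p.1 p.2 - f q.1 q.2 ≤ C t₀ * r ^ α

/-- The weight `dist(x, ∂Ω)⁻² + t⁻¹` of the interior derivative bounds, with the distance
measured in the sup metric of `ι → ℝ`. -/
noncomputable def parabolicWeight (Ω : Set (ι → ℝ)) (x : ι → ℝ) (t : ℝ) : ℝ :=
  1 / infDist x (frontier Ω) ^ 2 + 1 / t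

/-- `f` has time derivative `ft` and partial derivatives `gf` on `Ω × (0, T]`, one-sided in time at
`t = T`, and these are bounded by the parabolically scaled weight. -/
structure InteriorDerivLE [DecidableEq ι] (Ω : Set (ι → ℝ)) (T c : ℝ) (f ft : (ι → ℝ) → ℝ → ℝ)
    (gf : (ι → ℝ) → ℝ → ι → ℝ) : Prop where
  hasDerivWithinAt : ∀ x ∈ Ω, ∀ t ∈ Ioc 0 T, HasDerivWithinAt (f x) (ft x t) (Ioc 0 T) t
  hasLineDerivAt : ∀ x ∈ Ω, ∀ t ∈ Ioc 0 T, ∀ i,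
    HasLineDerivAt ℝ (fun z => f z t) (gf x t i) x (Pi.single i 1)
  sqrt_sum_sq_le : ∀ x ∈ Ω, ∀ t ∈ Ioc 0 T,
    √(∑ i, gf x t i ^ 2) ≤ c * √(parabolicWeight Ω x t)
  abs_le : ∀ x ∈ Ω, ∀ t ∈ Ioc 0 T, |ft x t| ≤ c * parabolicWeight Ω x t

theorem BoundaryOscillationLE.abs_sub_le_of_mem (h : BoundaryOscillationLE Ω T α C f)
    {x₀ : ι → ℝ} (hx₀ : x₀ ∈ frontier Ω) {r t₀ : ℝ} (hr : 0 < r) (ht₀ : r ^ 2 < t₀)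
    (hx : (x, t) ∈ parabolicCylinder Ω T x₀ t₀ r) (hy : (y, s) ∈ parabolicCylinder Ω T x₀ t₀ r) :
    |f x t - f y s| ≤ C t₀ * r ^ α :=
  abs_sub_le_iff.2 ⟨h x₀ hx₀ r hr t₀ ht₀ _ hx _ hy, h x₀ hx₀ r hr t₀ ht₀ _ hy _ hx⟩

theorem BoundaryOscillationLE.abs_sub_le (h : BoundaryOscillationLE Ω T α C f)
    (hC : AntitoneOn C (Ioi 0)) (hτ : 0 < τ) {x₀ : ι → ℝ} (hx₀ : x₀ ∈ frontier Ω) {r : ℝ}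
    (hr : 0 < r) (hx : x ∈ Ω) (hy : y ∈ Ω) (hs : s ∈ Icc τ T) (ht : t ∈ Icc τ T)
    (hxr : euclideanDist x x₀ < r) (hyr : euclideanDist y x₀ < r) (hts : |t - s| < r ^ 2) :
    |f x t - f y s| ≤ C τ * r ^ α := by
  -- The term `r ^ 2 + τ / 2` enforces `r ^ 2 < t₀` while keeping the bottom below `τ`.
  set t₀ := max (max t s) (r ^ 2 + τ / 2)
  have hτt₀ : τ ≤ t₀ := ht.1.trans ((le_max_left t s).trans (le_max_left _ _))
  have hrt₀ : r ^ 2 < t₀ := lt_of_lt_of_le (by linarith) (le_max_right _ _)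
  have hbottom : t₀ - r ^ 2 < min t s := by
    obtain ⟨hst, hts⟩ := abs_sub_lt_iff.1 hts
    have hτs := hs.1
    have hτt := ht.1
    grind
  calc |f x t - f y s| ≤ C t₀ * r ^ α :=
        h.abs_sub_le_of_mem hx₀ hr hrt₀
          ⟨hx, Icc_subset_Ioc_left hτ ht, hxr, hbottom.trans_le (min_le_left t s),
            (le_max_left t s).trans (le_max_left _ _)⟩
          ⟨hy, Icc_subset_Ioc_left hτ hs, hyr, hbottom.trans_le (min_le_right t s),
            (le_max_right t s).trans (le_max_left _ _)⟩
    _ ≤ C τ * r ^ α :=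
        mul_le_mul_of_nonneg_right (hC hτ (hτ.trans_le hτt₀) hτt₀) (Real.rpow_nonneg hr.le α)

theorem BoundaryOscillationLE.abs_sub_le_of_infDist_lt [Nonempty ι]
    (h : BoundaryOscillationLE Ω T α C f) (hC : AntitoneOn C (Ioi 0)) (hτ : 0 < τ)
    (hΩ : Bornology.IsBounded Ω) (hx : x ∈ Ω) (hy : y ∈ Ω) (hs : s ∈ Icc τ T) (ht : t ∈ Icc τ T)
    (hδ : 0 < δ) (hρδ : parabolicDist x t y s ≤ δ) (hxδ : infDist x (frontier Ω) < 2 * δ) :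
    |f x t - f y s| ≤ C τ * (3 * Fintype.card ι * δ) ^ α := by
  obtain ⟨x₀, hx₀, hxx₀⟩ := (infDist_lt_iff (frontier_nonempty_of_isBounded ⟨x, hx⟩ hΩ)).1 hxδ
  have hcard : (1 : ℝ) ≤ Fintype.card ι := by exact_mod_cast Fintype.card_pos (α := ι)
  have hδr : δ ≤ Fintype.card ι * δ := le_mul_of_one_le_left hδ.le hcard
  have hxr : euclideanDist x x₀ < Fintype.card ι * (2 * δ) :=
    (euclideanDist_le_card_mul_dist x x₀).trans_lt (by gcongr)
  have hyr : euclideanDist y x₀ ≤ δ + euclideanDist x x₀ :=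
    (euclideanDist_triangle y x x₀).trans <| add_le_add_left
      ((euclideanDist_comm y x).trans_le ((euclideanDist_le_parabolicDist x y t s).trans hρδ)) _
  have hts : |t - s| < (3 * Fintype.card ι * δ) ^ 2 :=
    (abs_sub_le_parabolicDist_sq x y t s).trans_lt <|
      pow_lt_pow_left₀ (by linarith) (parabolicDist_nonneg x y t s) two_ne_zero
  exact h.abs_sub_le hC hτ hx₀ (by positivity) hx hy hs ht (by linarith) (by linarith) hts

theorem BoundaryOscillationLE.abs_sub_le_of_diam_le [Nonempty ι]
    (h : BoundaryOscillationLE Ω T α C f) (hC : AntitoneOn C (Ioi 0)) (hτ : 0 < τ)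
    (hΩ : Bornology.IsBounded Ω) {D : ℝ} (hD : diam Ω ≤ D) (hx : x ∈ Ω) (hy : y ∈ Ω)
    (hs : s ∈ Icc τ T) (ht : t ∈ Icc τ T) :
    |f x t - f y s| ≤ C τ * (Fintype.card ι * D + √T + 1) ^ α := by
  obtain ⟨x₀, hx₀⟩ := frontier_nonempty_of_isBounded ⟨x, hx⟩ hΩ
  have hT : 0 ≤ T := hτ.le.trans (ht.1.trans ht.2)
  have hD₀ : 0 ≤ Fintype.card ι * D := mul_nonneg (Nat.cast_nonneg _) (diam_nonneg.trans hD)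
  have hnear : ∀ z ∈ Ω, euclideanDist z x₀ < Fintype.card ι * D + √T + 1 := fun z hz => by
    have hzx₀ : dist z x₀ ≤ D := hD.trans' <| diam_closure Ω ▸
      dist_le_diam_of_mem hΩ.closure (subset_closure hz) (frontier_subset_closure hx₀)
    have := (euclideanDist_le_card_mul_dist z x₀).trans
      (mul_le_mul_of_nonneg_left hzx₀ (Nat.cast_nonneg _))
    linarith [Real.sqrt_nonneg T]
  have hts : |t - s| < (Fintype.card ι * D + √T + 1) ^ 2 := calc
    |t - s| ≤ T := abs_le.2 ⟨by linarith [hs.2, ht.1], by linarith [hs.1, ht.2]⟩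
    _ = √T ^ 2 := (Real.sq_sqrt hT).symm
    _ < _ := pow_lt_pow_left₀ (by linarith) (Real.sqrt_nonneg T) two_ne_zero
  exact h.abs_sub_le hC hτ hx₀ (by positivity) hx hy hs ht (hnear x hx) (hnear y hy) hts

theorem parabolicWeight_le (hτ : 0 < τ) (hδ : 0 < δ) (hδ₁ : δ ≤ 1)
    (hx : δ ≤ infDist x (frontier Ω)) (ht : τ ≤ t) :
    parabolicWeight Ω x t ≤ (1 + 1 / τ) / δ ^ 2 := by
  have htime : 1 / t ≤ 1 / τ / δ ^ 2 :=
    (one_div_le_one_div_of_le hτ ht).trans <|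
      le_div_self (by positivity) (by positivity) (pow_le_one₀ hδ.le hδ₁)
  have hspace : 1 / infDist x (frontier Ω) ^ 2 ≤ 1 / δ ^ 2 := by gcongr
  rw [parabolicWeight, add_div]
  exact add_le_add hspace htime

theorem sqrt_parabolicWeight_le (hτ : 0 < τ) (hδ : 0 < δ) (hδ₁ : δ ≤ 1)
    (hx : δ ≤ infDist x (frontier Ω)) (ht : τ ≤ t) :
    √(parabolicWeight Ω x t) ≤ (1 + 1 / τ) / δ := by
  refine Real.sqrt_le_iff.2 ⟨by positivity, (parabolicWeight_le hτ hδ hδ₁ hx ht).trans ?_⟩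
  rw [div_pow]
  gcongr
  exact le_self_pow₀ (le_add_of_nonneg_right (by positivity)) two_ne_zero

variable [DecidableEq ι]

theorem InteriorDerivLE.abs_sub_space_le (h : InteriorDerivLE Ω T c f ft gf) (hc : 0 ≤ c)
    (hτ : 0 < τ) (hδ : 0 < δ) (hδ₁ : δ ≤ 1) (ht : t ∈ Icc τ T) (hbox : uIcc x y ⊆ Ω)
    (hfar : ∀ z ∈ uIcc x y, δ ≤ infDist z (frontier Ω)) :
    |f y t - f x t| ≤ c * ((1 + 1 / τ) / δ) * (Fintype.card ι * dist y x) := by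
  have ht' := Icc_subset_Ioc_left hτ ht
  have hpartial : ∀ z ∈ uIcc x y, ∀ i, ‖gf z t i‖ ≤ c * ((1 + 1 / τ) / δ) := fun z hz i => calc
    ‖gf z t i‖ ≤ √(∑ j, gf z t j ^ 2) := abs_apply_le_sqrt_sum_sq (gf z t) i
    _ ≤ c * √(parabolicWeight Ω z t) := h.sqrt_sum_sq_le z (hbox hz) t ht'
    _ ≤ c * ((1 + 1 / τ) / δ) := by
      gcongr
      exact sqrt_parabolicWeight_le hτ hδ hδ₁ (hfar z hz) ht.1
  calc |f y t - f x t| ≤ ∑ i, c * ((1 + 1 / τ) / δ) * |y i - x i| :=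
        norm_sub_le_sum_of_hasLineDerivAt_single
          (fun z hz => h.hasLineDerivAt z (hbox hz) t ht') hpartial
    _ = c * ((1 + 1 / τ) / δ) * ∑ i, |y i - x i| := by rw [Finset.mul_sum]
    _ ≤ c * ((1 + 1 / τ) / δ) * (Fintype.card ι * dist y x) := by
      gcongr
      exact sum_abs_sub_le_card_mul_dist y x

theorem InteriorDerivLE.abs_sub_time_le (h : InteriorDerivLE Ω T c f ft gf) (hc : 0 ≤ c)
    (hτ : 0 < τ) (hδ : 0 < δ) (hδ₁ : δ ≤ 1) (hx : x ∈ Ω) (hs : s ∈ Icc τ T) (ht : t ∈ Icc τ T)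
    (hfar : δ ≤ infDist x (frontier Ω)) :
    |f x t - f x s| ≤ c * ((1 + 1 / τ) / δ ^ 2) * |t - s| := by
  have hsub := Icc_subset_Ioc_left (b := T) hτ
  refine (convex_Icc τ T).norm_image_sub_le_of_norm_hasDerivWithin_le
    (fun u hu => (h.hasDerivWithinAt x hx u (hsub hu)).mono hsub) (fun u hu => ?_) hs ht
  exact (h.abs_le x hx u (hsub hu)).trans
    (mul_le_mul_of_nonneg_left (parabolicWeight_le hτ hδ hδ₁ hfar hu.1) hc)

theorem InteriorDerivLE.abs_sub_le_of_le_infDist (h : InteriorDerivLE Ω T c f ft gf)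
    (hc : 0 ≤ c) (hτ : 0 < τ) (hΩ : IsOpen Ω) (hx : x ∈ Ω) (hs : s ∈ Icc τ T) (ht : t ∈ Icc τ T)
    (hδ : 0 < δ) (hδ₁ : δ ≤ 1) (hρδ : parabolicDist x t y s ≤ δ)
    (hxδ : 2 * δ ≤ infDist x (frontier Ω)) :
    |f x t - f y s| ≤ (Fintype.card ι + 1) * (c * (1 + 1 / τ)) * (parabolicDist x t y s / δ) := by
  set ρ := parabolicDist x t y s
  have hρ₀ : 0 ≤ ρ := parabolicDist_nonneg x y t s
  have hyx : dist y x ≤ ρ := dist_comm y x ▸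
    (dist_le_euclideanDist x y).trans (euclideanDist_le_parabolicDist x y t s)
  have hball : uIcc x y ⊆ closedBall x δ :=
    (uIcc_subset_closedBall_dist x y).trans (closedBall_subset_closedBall (hyx.trans hρδ))
  have hbox : uIcc x y ⊆ Ω := hball.trans <|
    closedBall_subset_of_lt_infDist_frontier hΩ hx hδ.le (by linarith)
  have hfar : ∀ z ∈ uIcc x y, δ ≤ infDist z (frontier Ω) := fun z hz => by
    have hzx : dist x z ≤ δ := dist_comm x z ▸ hball hz
    linarith [infDist_le_infDist_add_dist (s := frontier Ω) (x := x) (y := z)]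
  have hspace : |f y t - f x t| ≤ Fintype.card ι * (c * (1 + 1 / τ)) * (ρ / δ) := calc
    _ ≤ c * ((1 + 1 / τ) / δ) * (Fintype.card ι * dist y x) :=
      h.abs_sub_space_le hc hτ hδ hδ₁ ht hbox hfar
    _ ≤ c * ((1 + 1 / τ) / δ) * (Fintype.card ι * ρ) := by gcongr
    _ = _ := by ring
  have htime : |f y t - f y s| ≤ c * (1 + 1 / τ) * (ρ / δ) := calc
    _ ≤ c * ((1 + 1 / τ) / δ ^ 2) * |t - s| :=
      h.abs_sub_time_le hc hτ hδ hδ₁ (hbox right_mem_uIcc) hs ht (hfar y right_mem_uIcc)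
    _ ≤ c * ((1 + 1 / τ) / δ ^ 2) * ρ ^ 2 := by
      gcongr
      exact abs_sub_le_parabolicDist_sq x y t s
    _ = c * (1 + 1 / τ) * (ρ / δ) ^ 2 := by ring
    _ ≤ c * (1 + 1 / τ) * (ρ / δ) := by
      gcongr
      exact pow_le_of_le_one (by positivity) ((div_le_one hδ).2 hρδ) two_ne_zero
  rw [abs_sub_comm] at hspace
  linarith [abs_sub_le (f x t) (f y t) (f y s)]

theorem abs_sub_le_of_parabolicDist_le_one [Nonempty ι] (hα : 0 ≤ α) (hc : 0 ≤ c) (hτ : 0 < τ)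
    (hCτ : 0 ≤ C τ) (hC : AntitoneOn C (Ioi 0)) (hΩ : IsOpen Ω) (hbdd : Bornology.IsBounded Ω)
    (hosc : BoundaryOscillationLE Ω T α C f) (hderiv : InteriorDerivLE Ω T c f ft gf)
    (hx : x ∈ Ω) (hy : y ∈ Ω) (hs : s ∈ Icc τ T) (ht : t ∈ Icc τ T)
    (hρ₀ : 0 < parabolicDist x t y s) (hρ₁ : parabolicDist x t y s ≤ 1) :
    |f x t - f y s| ≤
      (C τ * (3 * Fintype.card ι) ^ α + (Fintype.card ι + 1) * (c * (1 + 1 / τ))) *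
        parabolicDist x t y s ^ (α / (α + 1)) := by
  set ρ := parabolicDist x t y s
  set δ := ρ ^ (1 / (α + 1)) with hδ
  have hα₁ : 0 < α + 1 := by linarith
  have hδ₀ : 0 < δ := by positivity
  have hδ₁ : δ ≤ 1 := Real.rpow_le_one hρ₀.le hρ₁ (by positivity)
  have hρδ : ρ ≤ δ :=
    Real.self_le_rpow_of_le_one hρ₀.le hρ₁ ((div_le_one hα₁).2 (by linarith))
  have hδα : δ ^ α = ρ ^ (α / (α + 1)) := by
    rw [hδ, ← Real.rpow_mul hρ₀.le, one_div_mul_eq_div]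
  have hρ_div_δ : ρ / δ = ρ ^ (α / (α + 1)) := by
    rw [eq_comm, hδ, eq_div_iff hδ₀.ne', ← Real.rpow_add hρ₀, ← add_div, div_self hα₁.ne',
      Real.rpow_one]
  rw [add_mul]
  rcases lt_or_ge (infDist x (frontier Ω)) (2 * δ) with hd | hd
  · have hnear := hosc.abs_sub_le_of_infDist_lt hC hτ hbdd hx hy hs ht hδ₀ hρδ hd
    rw [Real.mul_rpow (by positivity) hδ₀.le, hδα, ← mul_assoc] at hnear
    exact hnear.trans (le_add_of_nonneg_right (by positivity))
  · have hfar := hderiv.abs_sub_le_of_le_infDist hc hτ hΩ hx hs ht hδ₀ hδ₁ hρδ hd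
    rw [hρ_div_δ] at hfar
    exact hfar.trans (le_add_of_nonneg_left (by positivity))

end Estimates

theorem holder_linking_lemma_general {ι : Type*} [Fintype ι] [DecidableEq ι] [Nonempty ι]
    {T α c τ D : ℝ} (hα : 0 ≤ α) (hc : 0 ≤ c) (hτ : 0 < τ) (hD : 0 ≤ D) {C : ℝ → ℝ}
    (hCτ : 0 < C τ) (hC : AntitoneOn C (Ioi 0)) :
    ∃ C' : ℝ, 0 < C' ∧ ∀ Ω : Set (ι → ℝ), IsOpen Ω → Bornology.IsBounded Ω → diam Ω ≤ D →
      ∀ (f ft : (ι → ℝ) → ℝ → ℝ) (gf : (ι → ℝ) → ℝ → ι → ℝ),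
      BoundaryOscillationLE Ω T α C f → InteriorDerivLE Ω T c f ft gf →
      ∀ x ∈ Ω, ∀ y ∈ Ω, ∀ s ∈ Icc τ T, ∀ t ∈ Icc τ T,
        |f x t - f y s| ≤ C' * parabolicDist x t y s ^ (α / (α + 1)) := by
  set K := C τ * (3 * Fintype.card ι) ^ α + (Fintype.card ι + 1) * (c * (1 + 1 / τ))
  set M := C τ * (Fintype.card ι * D + √T + 1) ^ α
  have hK : 0 ≤ K := by positivity
  have hM : 0 < M := by positivity
  refine ⟨K + M, by positivity, ?_⟩
  intro Ω hΩ hbdd hdiam f ft gf hosc hderiv x hx y hy s hs t ht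
  rcases (parabolicDist_nonneg x y t s).eq_or_lt with hρ₀ | hρ₀
  · obtain ⟨rfl, rfl⟩ := eq_of_parabolicDist_eq_zero hρ₀.symm
    rw [sub_self, abs_zero]
    exact mul_nonneg (by positivity) (Real.rpow_nonneg hρ₀.le _)
  rcases le_or_gt (parabolicDist x t y s) 1 with hρ₁ | hρ₁
  · refine (abs_sub_le_of_parabolicDist_le_one hα hc hτ hCτ.le hC hΩ hbdd hosc hderiv hx hy hs ht
      hρ₀ hρ₁).trans ?_
    exact mul_le_mul_of_nonneg_right (le_add_of_nonneg_right hM.le) (Real.rpow_nonneg hρ₀.le _)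
  · calc |f x t - f y s| ≤ M := hosc.abs_sub_le_of_diam_le hC hτ hbdd hdiam hx hy hs ht
      _ ≤ K + M := le_add_of_nonneg_left hK
      _ ≤ (K + M) * parabolicDist x t y s ^ (α / (α + 1)) :=
        le_mul_of_one_le_right (by positivity) (Real.one_le_rpow hρ₁.le (by positivity))

/-- Linking lemma: a boundary Hölder oscillation estimate plus
interior gradient bounds yield a global parabolic Hölder estimate with exponent
`α' = α/(α+1)`. -/
theorem holder_linking_lemma
    (n : ℕ) (hn : 1 ≤ n)
    (Ω : Set (Fin n → ℝ)) (hΩ_open : IsOpen Ω) (hΩ_bdd : Bornology.IsBounded Ω)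
    (hΩ_conv : Convex ℝ Ω)
    (T α c : ℝ) (hT : 0 < T) (hα : α ∈ Set.Ioc (0:ℝ) 1) (hc : 0 < c)
    (C : ℝ → ℝ) (hC_pos : ∀ s : ℝ, 0 < s → 0 < C s)
    (hC_anti : ∀ s s' : ℝ, 0 < s → s ≤ s' → C s' ≤ C s) :
    ∀ τ ∈ Set.Ioc (0:ℝ) T,
    ∃ C' : ℝ, 0 < C' ∧
      ∀ (f ft : (Fin n → ℝ) → ℝ → ℝ) (gf : (Fin n → ℝ) → ℝ → Fin n → ℝ),
      -- f is differentiable in space and in time on Ω × (0,T]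
      (∀ x ∈ Ω, ∀ t ∈ Set.Ioc (0:ℝ) T,
        HasDerivWithinAt (fun s => f x s) (ft x t) (Set.Ioc 0 T) t) →
      (∀ x ∈ Ω, ∀ t ∈ Set.Ioc (0:ℝ) T, ∀ i,
        HasDerivAt (fun s : ℝ => f (x + s • (Pi.single i 1 : Fin n → ℝ)) t)
          (gf x t i) 0) →
      -- (i) boundary Hölder oscillation estimate
      (∀ x₀ ∈ frontier Ω, ∀ r : ℝ, 0 < r → ∀ t₀ : ℝ, r ^ 2 < t₀ →
        ∀ x ∈ Ω, ∀ t ∈ Set.Ioc (0:ℝ) T,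
        Real.sqrt (∑ i, (x i - x₀ i) ^ 2) < r → t₀ - r ^ 2 < t → t ≤ t₀ →
        ∀ y ∈ Ω, ∀ s ∈ Set.Ioc (0:ℝ) T,
        Real.sqrt (∑ i, (y i - x₀ i) ^ 2) < r → t₀ - r ^ 2 < s → s ≤ t₀ →
          f x t - f y s ≤ C t₀ * r ^ α) →
      -- (ii) interior gradient bounds
      (∀ x ∈ Ω, ∀ t ∈ Set.Ioc (0:ℝ) T,
        Real.sqrt (∑ i, (gf x t i) ^ 2) ≤
          c * Real.sqrt (1 / Metric.infDist x (frontier Ω) ^ 2 + 1 / t)) →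
      (∀ x ∈ Ω, ∀ t ∈ Set.Ioc (0:ℝ) T,
        |ft x t| ≤ c * (1 / Metric.infDist x (frontier Ω) ^ 2 + 1 / t)) →
      ∀ x ∈ Ω, ∀ y ∈ Ω, ∀ s ∈ Set.Icc τ T, ∀ t ∈ Set.Icc τ T,
        |f x t - f y s| ≤
          C' * (Real.sqrt (∑ i, (x i - y i) ^ 2) + Real.sqrt |t - s|)
            ^ (α / (α + 1)) := by
  rintro τ ⟨hτ, -⟩
  have : Nonempty (Fin n) := ⟨⟨0, hn⟩⟩
  obtain ⟨C', hC', hlink⟩ := holder_linking_lemma_general (ι := Fin n) (T := T) hα.1.le hc.le hτ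
    (diam_nonneg (s := Ω)) (hC_pos τ hτ) fun s hs s' _ h => hC_anti s s' hs h
  refine ⟨C', hC', fun f ft gf hft hgf hosc hgrad htime => ?_⟩
  refine hlink Ω hΩ_open hΩ_bdd le_rfl f ft gf ?_ ⟨hft, hgf, hgrad, htime⟩
  rintro x₀ hx₀ r hr t₀ ht₀ ⟨x, t⟩ ⟨hx, ht, hxr, hlt, htt₀⟩ ⟨y, s⟩ ⟨hy, hs, hyr, hls, hst₀⟩
  exact hosc x₀ hx₀ r hr t₀ ht₀ x hx t ht hxr hlt htt₀ y hy s hs hyr hls hst₀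
end
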